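/- arXiv:1610.05740 — 3 statements merged into one kernel-verified Lean document; each statement's English description precedes it below -/
import Mathlib

section
/- For a function F : ℝ → ℝ, the following are equivalent: (1) F applied entrywise maps the union over u ∈ (0,1) of the sets M({−1,u,1}) into M(ℝ); (2) F applied entrywise maps M([−1,1]) into M(ℝ); (3) F is the restriction to ℝ of an absolutely monotonic entire function. -/
open MeasureTheory Filter Set
open scoped ENNReal

/-- An admissible measure: a non-negative Borel measure on `ℝ` all of whose absolute
moments are finite. -/
def IsAdmissible (μ : Measure ℝ) : Prop := ∀ k : ℕ, Integrable (fun x => x ^ k) μ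

/-- The `k`-th power moment of a measure. -/
noncomputable def moment (μ : Measure ℝ) (k : ℕ) : ℝ := ∫ x, x ^ k ∂μ

/-- `momentSet K` is the set of moment sequences of admissible measures supported in `K`. -/
def momentSet (K : Set ℝ) : Set (ℕ → ℝ) :=
  {s | ∃ μ : Measure ℝ, IsAdmissible μ ∧ μ Kᶜ = 0 ∧ ∀ k, s k = moment μ k}

/-- An absolutely monotonic entire function: a power series with non-negative
coefficients converging at every real point. -/
def AbsolutelyMonotonicEntire (G : ℝ → ℝ) : Prop :=
  ∃ c : ℕ → ℝ, (∀ n, 0 ≤ c n) ∧ ∀ x : ℝ, HasSum (fun n => c n * x ^ n) (G x)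


lemma adm_finite {σ : Measure ℝ} (h : IsAdmissible σ) : IsFiniteMeasure σ := by
  have h0 := h 0
  simp only [pow_zero] at h0
  exact (integrable_const_iff_isFiniteMeasure one_ne_zero).1 h0

lemma adm_three {a b c u : ℝ} :
    IsAdmissible (ENNReal.ofReal a • Measure.dirac (1:ℝ) + ENNReal.ofReal b • Measure.dirac u
      + ENNReal.ofReal c • Measure.dirac (-1:ℝ)) := by
  intro k
  have hd : ∀ (r y : ℝ), Integrable (fun x : ℝ => x ^ k) (ENNReal.ofReal r • Measure.dirac y) := by
    intro r y
    apply Integrable.smul_measure _ ENNReal.ofReal_ne_top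
    exact integrable_dirac (by simp)
  exact ((hd a 1).add_measure (hd b u)).add_measure (hd c (-1))

lemma moment_three {a b c u : ℝ} (ha : 0 ≤ a) (hb : 0 ≤ b) (hc : 0 ≤ c) (k : ℕ) :
    moment (ENNReal.ofReal a • Measure.dirac (1:ℝ) + ENNReal.ofReal b • Measure.dirac u
      + ENNReal.ofReal c • Measure.dirac (-1:ℝ)) k = a + b * u ^ k + c * (-1) ^ k := by
  have hd : ∀ (r y : ℝ), Integrable (fun x : ℝ => x ^ k) (ENNReal.ofReal r • Measure.dirac y) := by
    intro r y
    apply Integrable.smul_measure _ ENNReal.ofReal_ne_top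
    exact integrable_dirac (by simp)
  unfold moment
  rw [integral_add_measure ((hd a 1).add_measure (hd b u)) (hd c (-1)),
    integral_add_measure (hd a 1) (hd b u)]
  simp [integral_smul_measure, ha, hb, hc]

def Hyp1 (F : ℝ → ℝ) : Prop := ∀ u ∈ Set.Ioo (0 : ℝ) 1, ∀ s ∈ momentSet ({-1, u, 1} : Set ℝ),
          (fun k => F (s k)) ∈ momentSet (Set.univ : Set ℝ)

lemma three_point {F : ℝ → ℝ} (h : Hyp1 F) {a b c u : ℝ} (ha : 0 ≤ a) (hb : 0 ≤ b) (hc : 0 ≤ c)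
    (hu : u ∈ Set.Ioo (0:ℝ) 1) :
    ∃ σ : Measure ℝ, IsAdmissible σ ∧ ∀ k, moment σ k = F (a + b * u ^ k + c * (-1) ^ k) := by
  obtain ⟨σ, h1, -, h2⟩ := h u hu (fun k => a + b * u ^ k + c * (-1) ^ k)
    ⟨ENNReal.ofReal a • Measure.dirac (1:ℝ) + ENNReal.ofReal b • Measure.dirac u
      + ENNReal.ofReal c • Measure.dirac (-1:ℝ), adm_three, by simp,
      fun k => (moment_three ha hb hc k).symm⟩
  exact ⟨σ, h1, fun k => (h2 k).symm⟩

lemma two_point {F : ℝ → ℝ} (h : Hyp1 F) {a b u : ℝ} (ha : 0 ≤ a) (hb : 0 ≤ b)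
    (hu : u ∈ Set.Ioo (0:ℝ) 1) :
    ∃ σ : Measure ℝ, IsAdmissible σ ∧ ∀ k, moment σ k = F (a + b * u ^ k) := by
  simpa using three_point h ha hb le_rfl hu

lemma adm_poly {σ : Measure ℝ} (h : IsAdmissible σ) (p : Polynomial ℝ) :
    Integrable (fun x => p.eval x) σ ∧
    ∫ x, p.eval x ∂σ = ∑ k ∈ Finset.range (p.natDegree + 1), p.coeff k * moment σ k := by
  have hk : ∀ k ∈ Finset.range (p.natDegree + 1), Integrable (fun x => p.coeff k * x ^ k) σ :=
    fun k _ => (h k).const_mul _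
  simp only [Polynomial.eval_eq_sum_range]
  refine ⟨integrable_finsetSum _ hk, ?_⟩
  rw [integral_finsetSum _ hk]
  simp only [integral_const_mul, moment]

lemma poly_nonneg {σ : Measure ℝ} (h : IsAdmissible σ) (p : Polynomial ℝ)
    (hp : ∀ᵐ x ∂σ, 0 ≤ p.eval x) :
    0 ≤ ∑ k ∈ Finset.range (p.natDegree + 1), p.coeff k * moment σ k := by
  rw [← (adm_poly h p).2]
  exact integral_nonneg_of_ae hp

lemma F_nonneg {F : ℝ → ℝ} (h : Hyp1 F) {x : ℝ} (hx : 0 ≤ x) : 0 ≤ F x := by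
  obtain ⟨σ, h1, h2⟩ := two_point h hx le_rfl (u := 1/2) (by norm_num)
  have := h2 0
  simp only [zero_mul, add_zero] at this
  rw [← this]
  unfold moment
  exact integral_nonneg (fun x => by simp)

lemma moment_cs {σ : Measure ℝ} (h : IsAdmissible σ) :
    moment σ 1 ^ 2 ≤ moment σ 0 * moment σ 2 := by
  have key : ∀ s : ℝ, 0 ≤ moment σ 0 * (s * s) + (2 * moment σ 1) * s + moment σ 2 := by
    intro s
    have : moment σ 0 * (s * s) + (2 * moment σ 1) * s + moment σ 2
        = ∫ x, (s + x) ^ 2 ∂σ := by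
      have e : ∀ x : ℝ, (s + x) ^ 2 = (s * s) * x ^ 0 + (2 * s) * x ^ 1 + x ^ 2 := by
        intro x; ring
      simp only [e]
      have h01 : Integrable (fun x : ℝ => (s * s) * x ^ 0 + (2 * s) * x ^ 1) σ :=
        ((h 0).const_mul _).add ((h 1).const_mul _)
      rw [integral_add h01 (h 2), integral_add ((h 0).const_mul _) ((h 1).const_mul _), integral_const_mul,
        integral_const_mul]
      unfold moment
      ring
    rw [this]
    exact integral_nonneg (fun x => by positivity)
  have := discrim_le_zero key
  unfold discrim at this
  nlinarith

lemma F_cs {F : ℝ → ℝ} (h : Hyp1 F) {x y z : ℝ} (hy : 0 < y) (hyz : y < z) (hzx : z < x)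
    (hz : z ^ 2 ≤ x * y) : F z ^ 2 ≤ F x * F y := by
  have hd : 0 < x + y - 2 * z := by
    by_contra hcon
    push Not at hcon
    have : 0 < (x - y)^2 := by
      have : 0 < x - y := by linarith
      positivity
    nlinarith
  have hxz : 0 < x - z := by linarith
  obtain ⟨σ, h1, h2⟩ := two_point h (a := (x*y - z^2)/(x+y-2*z)) (b := (x-z)^2/(x+y-2*z))
    (u := (z-y)/(x-z)) (by apply div_nonneg <;> linarith) (by positivity)
    ⟨by apply div_pos <;> linarith, by rw [div_lt_one hxz]; linarith⟩
  have := moment_cs h1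
  rw [h2, h2, h2] at this
  obtain ⟨D, hD⟩ : ∃ D, D = x + y - 2 * z := ⟨_, rfl⟩
  have hd' : D ≠ 0 := hD ▸ hd.ne'
  have hxz' := hxz.ne'
  have e0 : (x*y - z^2)/(x+y-2*z) + (x-z)^2/(x+y-2*z) * ((z-y)/(x-z))^0 = x := by
    rw [← hD]; field_simp; rw [hD]; ring
  have e1 : (x*y - z^2)/(x+y-2*z) + (x-z)^2/(x+y-2*z) * ((z-y)/(x-z))^1 = z := by
    rw [← hD]; field_simp; rw [hD]; ring
  have e2 : (x*y - z^2)/(x+y-2*z) + (x-z)^2/(x+y-2*z) * ((z-y)/(x-z))^2 = y := by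
    rw [← hD]; field_simp; rw [hD]; ring
  rwa [e0, e1, e2] at this

lemma F_mono {F : ℝ → ℝ} (h : Hyp1 F) : MonotoneOn F (Set.Ioi 0) := by
  intro z hz x hx hzx
  rcases hzx.eq_or_lt with rfl | hzx
  · exact le_rfl
  by_contra hcon
  push Not at hcon
  have hz : 0 < z := hz
  have hx : 0 < x := hx
  set w := z ^ 2 / x with hw
  have hw0 : 0 < w := by positivity
  have hwx : x * w = z ^ 2 := by rw [hw]; field_simp
  have hwz : w < z := by rw [hw, div_lt_iff₀ hx]; nlinarith
  have hFx : 0 < F x := by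
    rcases (F_nonneg h hx.le).eq_or_lt with h0 | h0
    · have := F_cs h hw0 hwz hzx hwx.ge
      rw [← h0] at this hcon
      nlinarith [pow_pos hcon 2]
    · exact h0
  set r := F z / F x with hr
  have hr1 : 1 < r := by rw [hr, lt_div_iff₀ hFx]; linarith
  have hFz : F z = r * F x := by rw [hr]; field_simp
  have claim : ∀ n : ℕ, ∀ y, w ≤ y → y < z → r ^ (n+1) * F x ≤ F y := by
    intro n
    induction n with
    | zero =>
      intro y h1 h2
      have := F_cs h (hw0.trans_le h1) h2 hzx (hwx ▸ by gcongr)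
      rw [hFz] at this
      have h3 : r ^ 2 * F x ≤ F y := by
        apply le_of_mul_le_mul_left _ hFx
        calc _ = (r * F x)^2 := by ring
          _ ≤ _ := this
      refine le_trans ?_ h3
      gcongr
      · exact hr1.le
      · norm_num
    | succ n ih =>
      intro y h1 h2
      have h3 := ih ((y+z)/2) (by linarith) (by linarith)
      have hsq : ((y+z)/2)^2 ≤ x * y := by
        calc ((y+z)/2)^2 ≤ z^2 := by
              apply pow_le_pow_left₀ <;> linarith
          _ = x * w := hwx.symm
          _ ≤ x * y := by gcongr
      have := F_cs h (hw0.trans_le h1) (show y < (y+z)/2 by linarith) (show (y+z)/2 < x by linarith) hsq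
      have h4 : (r ^ (n+1) * F x)^2 ≤ F x * F y := le_trans (by gcongr) this
      have h5 : (r ^ (n+1))^2 * F x ≤ F y := by
        apply le_of_mul_le_mul_left _ hFx
        calc _ = (r ^ (n+1) * F x)^2 := by ring
          _ ≤ _ := h4
      refine le_trans ?_ h5
      rw [← pow_mul]
      gcongr
      · exact hr1.le
      · omega
  obtain ⟨n, hn⟩ := pow_unbounded_of_one_lt (F w / F x) hr1
  rw [div_lt_iff₀ hFx] at hn
  have h1 := claim n w le_rfl hwz
  have h2 : r ^ n * F x ≤ r ^ (n+1) * F x := by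
    gcongr
    · exact hr1.le
    · omega
  linarith

lemma ae_le_one {σ : Measure ℝ} (h : IsAdmissible σ) (C : ℝ) (hC : ∀ m, moment σ (2 * m) ≤ C) :
    ∀ᵐ x ∂σ, |x| ≤ 1 := by
  have := adm_finite h
  have key : ∀ r : ℝ, 1 < r → σ {x | r ≤ |x|} = 0 := by
    intro r hr
    by_contra hne
    have hpos : 0 < σ.real {x | r ≤ |x|} :=
      ENNReal.toReal_pos hne (measure_ne_top _ _)
    obtain ⟨n, hn⟩ := pow_unbounded_of_one_lt (C / σ.real {x | r ≤ |x|}) hr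
    rw [div_lt_iff₀ hpos] at hn
    have h1 := mul_meas_ge_le_integral_of_nonneg (μ := σ) (f := fun x : ℝ => x ^ (2 * n))
      (Eventually.of_forall (fun x => by simp only [pow_mul]; positivity)) (h (2 * n)) (r ^ (2 * n))
    have h2 : σ.real {x | r ≤ |x|} ≤ σ.real {x : ℝ | r ^ (2*n) ≤ x ^ (2*n)} := by
      apply measureReal_mono _ (measure_ne_top _ _)
      intro x hx
      simp only [Set.mem_ofPred_eq] at hx ⊢
      have e : x ^ (2*n) = |x| ^ (2*n) := by rw [pow_mul, pow_mul, sq_abs]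
      rw [e]
      gcongr
    have h3 := hC n
    unfold moment at h3
    have h4 : r ^ n ≤ r ^ (2 * n) := by
      gcongr
      · exact hr.le
      · omega
    have : r ^ n * σ.real {x | r ≤ |x|} ≤ r ^ (2*n) * σ.real {x : ℝ | r ^ (2*n) ≤ x ^ (2*n)} := by
      gcongr
    linarith
  have h2 : ∀ᵐ x ∂σ, ∀ n : ℕ, ¬ (1 + 1 / ((n:ℝ) + 1) ≤ |x|) := by
    rw [ae_all_iff]
    intro n
    have hk := key (1 + 1 / ((n:ℝ) + 1)) (by
      have : (0:ℝ) < 1 / ((n:ℝ) + 1) := by positivity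
      linarith)
    rw [ae_iff]
    simpa using hk
  filter_upwards [h2] with x hx
  by_contra hcon
  push Not at hcon
  obtain ⟨n, hn⟩ := exists_nat_one_div_lt (sub_pos.2 hcon)
  exact hx n (by linarith)

lemma three_point_ae {F : ℝ → ℝ} (h : Hyp1 F) {a b c u : ℝ} (ha : 0 ≤ a) (hb : 0 < b) (hc : 0 ≤ c)
    (hu : u ∈ Set.Ioo (0:ℝ) 1) :
    ∃ σ : Measure ℝ, IsAdmissible σ ∧ (∀ᵐ x ∂σ, |x| ≤ 1) ∧
      ∀ k, moment σ k = F (a + b * u ^ k + c * (-1) ^ k) := by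
  obtain ⟨σ, h1, h2⟩ := three_point h ha hb.le hc hu
  refine ⟨σ, h1, ae_le_one h1 (F (a + b + c)) ?_, h2⟩
  intro m
  rw [h2]
  have e : (-1:ℝ) ^ (2 * m) = 1 := by simp [pow_mul]
  rw [e]
  have h3 : 0 < u ^ (2 * m) := pow_pos hu.1 _
  have h4 : u ^ (2 * m) ≤ 1 := pow_le_one₀ hu.1.le hu.2.le
  apply F_mono h
  · rw [Set.mem_Ioi]; positivity
  · rw [Set.mem_Ioi]; positivity
  · nlinarith



lemma three_point_ab {F : ℝ → ℝ} (h : Hyp1 F) {α β u : ℝ} (hαβ : |α| ≤ β)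
    (hu : u ∈ Set.Ioo (0:ℝ) 1) :
    ∃ σ : Measure ℝ, IsAdmissible σ ∧ (∀ᵐ x ∂σ, |x| ≤ 1) ∧
      (∀ k, moment σ (2 * k) = F (β + u ^ (2 * k))) ∧
      (∀ k, moment σ (2 * k + 1) = F (α + u ^ (2 * k + 1))) := by
  have := abs_le.1 hαβ
  obtain ⟨σ, h1, h2, h3⟩ := three_point_ae h (a := (β + α)/2) (b := 1) (c := (β - α)/2)
    (by linarith) one_pos (by linarith) hu
  refine ⟨σ, h1, h2, fun k => ?_, fun k => ?_⟩
  · rw [h3]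
    congr 1
    rw [pow_mul (-1:ℝ)]
    norm_num
    ring
  · rw [h3]
    congr 1
    rw [pow_succ (-1:ℝ), pow_mul (-1:ℝ)]
    norm_num
    ring

lemma F_diff {F : ℝ → ℝ} (h : Hyp1 F) {α β u : ℝ} (hαβ : |α| ≤ β)
    (hu : u ∈ Set.Ioo (0:ℝ) 1) :
    |F (α + u) - F (α + u ^ 3)| ≤ F (β + 1) - F (β + u ^ 2) := by
  obtain ⟨σ, h1, h2, h3, h4⟩ := three_point_ab h hαβ hu
  have key : ∀ s : ℝ, |s| ≤ 1 →
      0 ≤ moment σ 0 - moment σ 2 + s * (moment σ 1 - moment σ 3) := by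
    intro s hs
    have e : moment σ 0 - moment σ 2 + s * (moment σ 1 - moment σ 3)
        = ∫ x, (x ^ 0 - x ^ 2) + s * (x ^ 1 - x ^ 3) ∂σ := by
      have i1 : Integrable (fun x : ℝ => x ^ 0 - x ^ 2) σ := (h1 0).sub (h1 2)
      have i2 : Integrable (fun x : ℝ => x ^ 1 - x ^ 3) σ := (h1 1).sub (h1 3)
      rw [integral_add i1 (i2.const_mul s), integral_const_mul,
        integral_sub (h1 0) (h1 2), integral_sub (h1 1) (h1 3)]
      rfl
    rw [e]
    apply integral_nonneg_of_ae
    filter_upwards [h2] with x hx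
    have e2 : x ^ 0 - x ^ 2 + s * (x ^ 1 - x ^ 3) = (1 - x^2) * (1 + s * x) := by ring
    rw [Pi.zero_apply, e2]
    apply mul_nonneg
    · have := (sq_le_one_iff_abs_le_one x).2 hx
      linarith
    · have : |s * x| ≤ 1 := by
        rw [abs_mul]
        exact mul_le_one₀ hs (abs_nonneg _) hx
      linarith [(abs_le.1 this).1]
  have m0 := h3 0
  have m1 := h4 0
  have m2 := h3 1
  have m3 := h4 1
  norm_num at m0 m1 m2 m3
  have k1 := key 1 (by norm_num)
  have k2 := key (-1) (by norm_num)
  rw [m0, m1, m2, m3] at k1 k2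
  rw [abs_le]
  constructor <;> linarith

lemma F_cont {F : ℝ → ℝ} (h : Hyp1 F) : Continuous F := by
  rw [continuous_iff_continuousAt]
  intro x₀
  have hm : Monotone (fun x => F (max x 1)) := by
    intro x y hxy
    apply F_mono h
    · rw [Set.mem_Ioi]; positivity
    · rw [Set.mem_Ioi]; positivity
    · exact max_le_max_right _ hxy
  have hc := hm.countable_not_continuousAt
  have hex : ∃ y ∈ Set.Ioi (|x₀| + 3), ContinuousAt (fun x => F (max x 1)) y := by
    obtain ⟨y, hy1, hy2⟩ := (hc.dense_compl ℝ).exists_mem_open (isOpen_Ioi (a := |x₀| + 3))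
      ⟨|x₀| + 4, by rw [Set.mem_Ioi]; linarith⟩
    refine ⟨y, hy2, ?_⟩
    by_contra hcon
    exact hy1 hcon
  obtain ⟨y, hy, hyc⟩ := hex
  rw [Set.mem_Ioi] at hy
  have hab := abs_nonneg x₀
  rw [Metric.continuousAt_iff]
  intro ε hε
  have ht : Tendsto (fun u : ℝ => F (max (y - 1 + u ^ 2) 1)) (nhds 1) (nhds (F (max y 1))) := by
    have : Tendsto (fun u : ℝ => y - 1 + u ^ 2) (nhds 1) (nhds y) := by
      have : Continuous (fun u : ℝ => y - 1 + u ^ 2) := by fun_prop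
      have := this.tendsto 1
      simpa using this
    exact hyc.tendsto.comp this
  have ht2 := (Metric.tendsto_nhds.1 ht) ε hε
  obtain ⟨δ, hδ, hball⟩ := Metric.eventually_nhds_iff.1 ht2
  set u₀ := max (1 - δ/2) (1/2) with hu₀
  have hu0 : 1/2 ≤ u₀ := le_max_right _ _
  have hu1 : u₀ < 1 := by
    apply max_lt <;> linarith
  have hFd : ∀ u ∈ Set.Ioo u₀ 1, ∀ α, |α| ≤ |x₀| + 1 → |F (α + u) - F (α + u^3)| < ε := by
    intro u hu α hα
    have h1 : 1 - δ/2 ≤ u₀ := le_max_left _ _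
    have h2 := hball (y := u) (by
      rw [Real.dist_eq, abs_lt]; constructor <;> linarith [hu.1, hu.2])
    rw [max_eq_left (by nlinarith), max_eq_left (by linarith), Real.dist_eq] at h2
    have h3 := F_diff h (α := α) (β := y - 1) (u := u) (by linarith) ⟨by linarith [hu.1], hu.2⟩
    rw [sub_add_cancel] at h3
    have := neg_le_abs (F (y - 1 + u ^ 2) - F y)
    linarith
  refine ⟨u₀ - u₀ ^ 3, ?_, ?_⟩
  · have : u₀ ^ 2 < 1 := by nlinarith
    nlinarith
  intro x hx
  rw [Real.dist_eq] at hx ⊢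
  rcases eq_or_ne x x₀ with rfl | hne
  · simpa using hε
  have hs : |x - x₀| ∈ Set.Ioo (1 - 1 ^ 3 : ℝ) (u₀ - u₀ ^ 3) :=
    ⟨by norm_num; exact sub_ne_zero.2 hne, hx⟩
  obtain ⟨u, hu, hus⟩ := intermediate_value_Ioo' hu1.le
    (f := fun u : ℝ => u - u ^ 3) (by fun_prop) hs
  simp only at hus
  have hu3 : u ^ 3 ≤ 1 := pow_le_one₀ (by linarith [hu.1]) hu.2.le
  have hu30 : 0 ≤ u ^ 3 := pow_nonneg (by linarith [hu.1]) _
  rcases lt_or_gt_of_ne hne with hlt | hgt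
  · rw [abs_of_neg (by linarith)] at hus
    have := hFd u hu (x₀ - u) (by
      calc |x₀ - u| ≤ |x₀| + |u| := abs_sub _ _
        _ ≤ _ := by
          rw [abs_of_nonneg (by linarith [hu.1] : 0 ≤ u)]; linarith [hu.2])
    rw [abs_sub_comm]
    convert this using 4
    · ring
    · linarith
  · rw [abs_of_pos (by linarith)] at hus
    have := hFd u hu (x₀ - u ^ 3) (by
      calc |x₀ - u^3| ≤ |x₀| + |u^3| := abs_sub _ _
        _ ≤ _ := by rw [abs_of_nonneg hu30]; linarith)
    convert this using 4
    · linarith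
    · ring



lemma limit_series (A : ℕ → ℕ → ℝ) (hA : ∀ N m, 0 ≤ A N m) (H : ℝ → ℝ)
    (hH : ∀ x ∈ Set.Icc (0:ℝ) 1,
      Tendsto (fun N => ∑ m ∈ Finset.range (N + 1), A N m * x ^ m) atTop (nhds (H x))) :
    ∃ c : ℕ → ℝ, ∀ x ∈ Set.Ico (0:ℝ) 1, HasSum (fun m => c m * x ^ m) (H x) := by
  obtain ⟨M, hM⟩ := (hH 1 (by simp)).bddAbove_range
  set B : ℕ → ℕ → ℝ := fun N m => if m ∈ Finset.range (N + 1) then A N m else 0 with hB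
  have hB0 : ∀ N m, B N m ∈ Set.Icc 0 M := by
    intro N m
    have h1 : ∑ m ∈ Finset.range (N + 1), A N m * 1 ^ m ≤ M := hM ⟨N, rfl⟩
    simp only [one_pow, mul_one] at h1
    have h0 : 0 ≤ ∑ m ∈ Finset.range (N + 1), A N m := Finset.sum_nonneg (fun m _ => hA N m)
    simp only [hB]
    split_ifs with hm
    · exact ⟨hA N m, (Finset.single_le_sum (fun m _ => hA N m) hm).trans h1⟩
    · exact ⟨le_rfl, h0.trans h1⟩
  let U : Ultrafilter ℕ := hyperfilter ℕ
  have hU : (U : Filter ℕ) ≤ atTop := by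
    rw [← Nat.cofinite_eq_atTop]; exact hyperfilter_le_cofinite
  have hc : ∀ m, ∃ c ∈ Set.Icc 0 M, Tendsto (fun N => B N m) (U : Filter ℕ) (nhds c) := by
    intro m
    have := (isCompact_Icc (a := (0:ℝ)) (b := M)).ultrafilter_le_nhds (U.map (fun N => B N m))
      (by
        rw [le_principal_iff]
        exact Filter.Eventually.of_forall (f := (U : Filter ℕ)) (fun N => hB0 N m))
    exact this
  choose c hc1 hc2 using hc
  refine ⟨c, fun x hx => ?_⟩
  have hgeo : Summable (fun m : ℕ => M * x ^ m) :=
    (summable_geometric_of_lt_one hx.1 hx.2).mul_left _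
  have hs : Summable (fun m => c m * x ^ m) := by
    refine Summable.of_nonneg_of_le (fun m => mul_nonneg (hc1 m).1 (pow_nonneg hx.1 _))
      (fun m => mul_le_mul_of_nonneg_right (hc1 m).2 (pow_nonneg hx.1 _)) hgeo
  have ht := tendsto_tsum_of_dominated_convergence (𝓕 := (U : Filter ℕ))
    (f := fun N m => B N m * x ^ m) (g := fun m => c m * x ^ m) hgeo
    (fun m => (hc2 m).mul_const _)
    (Filter.Eventually.of_forall (fun N m => by
      rw [Real.norm_of_nonneg (mul_nonneg (hB0 N m).1 (pow_nonneg hx.1 _))]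
      exact mul_le_mul_of_nonneg_right (hB0 N m).2 (pow_nonneg hx.1 _)))
  have e : ∀ N, ∑' m, B N m * x ^ m = ∑ m ∈ Finset.range (N + 1), A N m * x ^ m := by
    intro N
    rw [tsum_eq_sum (s := Finset.range (N + 1))]
    · apply Finset.sum_congr rfl
      intro m hm
      simp only [hB, if_pos hm]
    · intro m hm
      simp only [hB, if_neg hm, zero_mul]
  simp only [e] at ht
  have := tendsto_nhds_unique ht ((hH x ⟨hx.1, hx.2.le⟩).mono_left hU)
  rw [← this]
  exact hs.hasSum

lemma series_analytic (d : ℕ → ℝ) (R : NNReal) (hR : 0 < R)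
    (hd : ∀ r : NNReal, r < R → Summable (fun m => d m * (r:ℝ) ^ m)) :
    AnalyticOnNhd ℝ (fun x : ℝ => ∑' m, d m * x ^ m) (Metric.ball 0 R) := by
  set p := FormalMultilinearSeries.ofScalars ℝ d with hp
  have hrad : (R : ℝ≥0∞) ≤ p.radius := by
    refine ENNReal.le_of_forall_nnreal_lt (fun r hr => ?_)
    have hr' : r < R := by exact_mod_cast hr
    have h1 := (hd r hr').tendsto_atTop_zero.norm
    apply p.le_radius_of_tendsto (l := ‖(0:ℝ)‖)
    refine h1.congr (fun n => ?_)
    rw [norm_mul, norm_pow, hp, FormalMultilinearSeries.ofScalars_norm]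
    simp
  have hb := (p.hasFPowerSeriesOnBall (lt_of_lt_of_le (by exact_mod_cast hR) hrad)).mono
    (by exact_mod_cast hR) hrad
  have h2 := hb.analyticOnNhd
  have e : p.sum = fun x : ℝ => ∑' m, d m * x ^ m := by
    funext x
    simp [FormalMultilinearSeries.sum, hp, mul_comm]
  rw [e] at h2
  convert h2 using 1
  ext x
  simp [dist_nndist]



lemma adm_cont {σ : Measure ℝ} (h : IsAdmissible σ) (h1 : ∀ᵐ x ∂σ, |x| ≤ 1) {f : ℝ → ℝ}
    (hf : Continuous f) : Integrable f σ := by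
  have := adm_finite h
  obtain ⟨C, hC⟩ := (isCompact_Icc (a := (-1:ℝ)) (b := 1)).exists_bound_of_continuousOn
    hf.continuousOn
  refine Integrable.of_bound hf.aestronglyMeasurable C ?_
  filter_upwards [h1] with x hx
  exact hC x (abs_le.1 hx)

open unitInterval in
lemma bern_tendsto (f : ℕ → C(I, ℝ)) (g : C(I, ℝ)) (hf : Tendsto f atTop (nhds g)) (x : I) :
    Tendsto (fun N => ∑ j ∈ Finset.range (N + 1), (N.choose j : ℝ) * (x:ℝ) ^ j * (1 - x) ^ (N - j) *
      (if hj : (j:ℝ) / N ∈ I then f N ⟨(j:ℝ)/N, hj⟩ else 0)) atTop (nhds (g x)) := by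
  have e : ∀ N, ∑ j ∈ Finset.range (N + 1), (N.choose j : ℝ) * (x:ℝ) ^ j * (1 - x) ^ (N - j) *
      (if hj : (j:ℝ) / N ∈ I then f N ⟨(j:ℝ)/N, hj⟩ else 0) = bernsteinApproximation N (f N) x := by
    intro N
    rw [bernsteinApproximation.apply, Finset.sum_range]
    apply Finset.sum_congr rfl
    intro j _
    rw [bernstein_apply, dif_pos (show ((j:ℕ):ℝ) / N ∈ I from (bernstein.z j).2), smul_eq_mul]
    rfl
  simp only [e]
  have h1 : Tendsto (fun N => bernsteinApproximation N g x) atTop (nhds (g x)) :=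
    ((continuous_eval_const x : Continuous fun k : C(I, ℝ) => k x).tendsto g).comp (bernsteinApproximation_uniform g)
  have h2 : Tendsto (fun N => bernsteinApproximation N (f N) x - bernsteinApproximation N g x) atTop
      (nhds 0) := by
    apply squeeze_zero_norm (a := fun N => ‖f N - g‖)
    · intro N
      rw [bernsteinApproximation.apply, bernsteinApproximation.apply, ← Finset.sum_sub_distrib]
      calc ‖∑ k : Fin (N+1), (bernstein N k x • f N (bernstein.z k) - bernstein N k x • g (bernstein.z k))‖
          ≤ ∑ k : Fin (N+1), bernstein N k x * ‖f N - g‖ := by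
            apply norm_sum_le_of_le
            intro k _
            rw [← smul_sub, norm_smul, Real.norm_of_nonneg bernstein_nonneg]
            apply mul_le_mul_of_nonneg_left _ bernstein_nonneg
            exact (f N - g).norm_coe_le_norm _
        _ = ‖f N - g‖ := by rw [← Finset.sum_mul, bernstein.probability, one_mul]
    · exact tendsto_iff_norm_sub_tendsto_zero.1 hf
  simpa using h2.add h1

lemma bern_coef {F : ℝ → ℝ} (h : Hyp1 F) {α β s : ℝ} (hαβ : |α| ≤ β) (hs : |s| ≤ 1) (N : ℕ)
    (hN : N ≠ 0) :
    ∃ A : ℕ → ℝ, (∀ m, 0 ≤ A m) ∧ ∀ x : ℝ, ∑ m ∈ Finset.range (N + 1), A m * x ^ m =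
      ∑ j ∈ Finset.range (N + 1), (N.choose j : ℝ) * x ^ j * (1 - x) ^ (N - j) *
        (F (β + Real.exp ((j:ℝ)/N - 1)) + s *
          F (α + Real.exp (-(1/(2*N))) * Real.exp ((j:ℝ)/N - 1))) := by
  have hN' : (0:ℝ) < N := by positivity
  set u := Real.exp (-(1/(2*N))) with hu
  obtain ⟨σ, h1, h2, h3, h4⟩ := three_point_ab h (u := u) hαβ ⟨Real.exp_pos _, by
    rw [hu, Real.exp_lt_one_iff]
    have : (0:ℝ) < 1/(2*N) := by positivity
    linarith⟩
  refine ⟨fun m => N.choose m * ∫ y, (1 + s * y) * ((1 - y^2) ^ m * (y^2) ^ (N - m)) ∂σ, ?_, ?_⟩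
  · intro m
    apply mul_nonneg (by positivity)
    apply integral_nonneg_of_ae
    filter_upwards [h2] with y hy
    rw [Pi.zero_apply]
    have a1 : 0 ≤ 1 - y ^ 2 := by
      have := (sq_le_one_iff_abs_le_one y).2 hy
      linarith
    have a2 : 0 ≤ 1 + s * y := by
      have : |s * y| ≤ 1 := by
        rw [abs_mul]
        exact mul_le_one₀ hs (abs_nonneg _) hy
      linarith [(abs_le.1 this).1]
    positivity
  · intro x
    have L : ∑ m ∈ Finset.range (N + 1),
        (N.choose m * ∫ y, (1 + s * y) * ((1 - y^2) ^ m * (y^2) ^ (N - m)) ∂σ) * x ^ m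
        = ∫ y, (1 + s * y) * (x * (1 - y^2) + y^2) ^ N ∂σ := by
      have e : ∀ y : ℝ, (1 + s * y) * (x * (1 - y^2) + y^2) ^ N = ∑ m ∈ Finset.range (N + 1),
          (N.choose m * x ^ m) * ((1 + s * y) * ((1 - y^2) ^ m * (y^2) ^ (N - m))) := by
        intro y
        rw [add_pow, Finset.mul_sum]
        apply Finset.sum_congr rfl
        intro m _
        rw [mul_pow]; ring
      simp only [e]
      rw [integral_finsetSum _ (fun m _ => adm_cont h1 h2 (by fun_prop))]
      apply Finset.sum_congr rfl
      intro m _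
      rw [integral_const_mul]; ring
    rw [L]
    have e : ∀ y : ℝ, (1 + s * y) * (x * (1 - y^2) + y^2) ^ N = ∑ j ∈ Finset.range (N + 1),
          (N.choose j * x ^ j * (1 - x) ^ (N - j)) *
            (y ^ (2 * (N - j)) + s * y ^ (2 * (N - j) + 1)) := by
      intro y
      rw [show x * (1 - y^2) + y^2 = x + (1 - x) * y^2 by ring, add_pow, Finset.mul_sum]
      apply Finset.sum_congr rfl
      intro m _
      rw [mul_pow, ← pow_mul]; ring
    simp only [e]
    rw [integral_finsetSum _ (fun m _ => adm_cont h1 h2 (by fun_prop))]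
    apply Finset.sum_congr rfl
    intro j hj
    have hj' : j ≤ N := by simpa [Nat.lt_succ_iff] using hj
    rw [integral_const_mul, integral_add (h1 _) ((h1 _).const_mul s), integral_const_mul]
    have m1 := h3 (N - j)
    have m2 := h4 (N - j)
    unfold moment at m1 m2
    have hp : u ^ (2 * (N - j)) = Real.exp ((j:ℝ)/N - 1) := by
      rw [hu, ← Real.exp_nat_mul]
      congr 1
      push_cast [Nat.cast_sub hj']
      field_simp
      ring
    rw [m1, m2, pow_succ', hp]

open unitInterval in
lemma bern_series {F : ℝ → ℝ} (h : Hyp1 F) {α β s : ℝ} (hαβ : |α| ≤ β) (hs : |s| ≤ 1) :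
    ∃ c : ℕ → ℝ, ∀ t ∈ Set.Ico (0:ℝ) 1, HasSum (fun m => c m * t ^ m)
      (F (β + Real.exp (t - 1)) + s * F (α + Real.exp (t - 1))) := by
  have hF := F_cont h
  have hex : ∀ N : ℕ, ∃ A : ℕ → ℝ, (∀ m, 0 ≤ A m) ∧ (N ≠ 0 → ∀ x : ℝ,
      ∑ m ∈ Finset.range (N + 1), A m * x ^ m =
      ∑ j ∈ Finset.range (N + 1), (N.choose j : ℝ) * x ^ j * (1 - x) ^ (N - j) *
        (F (β + Real.exp ((j:ℝ)/N - 1)) + s *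
          F (α + Real.exp (-(1/(2*N))) * Real.exp ((j:ℝ)/N - 1)))) := by
    intro N
    by_cases hN : N = 0
    · exact ⟨0, by simp, fun h => absurd hN h⟩
    · obtain ⟨A, h1, h2⟩ := bern_coef h hαβ hs N hN
      exact ⟨A, h1, fun _ => h2⟩
  choose A hA1 hA2 using hex
  apply limit_series A hA1
  intro x hx
  let g : C(ℝ × I, ℝ) := ⟨fun p => F (β + Real.exp ((p.2:ℝ) - 1)) + s *
          F (α + p.1 * Real.exp ((p.2:ℝ) - 1)), by fun_prop⟩
  have hu : Tendsto (fun N : ℕ => Real.exp (-(1/(2*(N:ℝ))))) atTop (nhds 1) := by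
    have h0 : Tendsto (fun N : ℕ => (-(1/(2*(N:ℝ))))) atTop (nhds 0) := by
      have := (tendsto_one_div_atTop_nhds_zero_nat (𝕜 := ℝ)).const_mul (-(1/2))
      rw [mul_zero] at this
      refine this.congr (fun N => ?_)
      rw [one_div, one_div, one_div, mul_inv]; ring
    have := (Real.continuous_exp.tendsto 0).comp h0
    rw [Real.exp_zero] at this
    exact this
  have hg : Tendsto (fun N : ℕ => g.curry (Real.exp (-(1/(2*(N:ℝ)))))) atTop (nhds (g.curry 1)) :=
    (g.curry.continuous.tendsto 1).comp hu
  have := bern_tendsto _ _ hg ⟨x, hx⟩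
  have e2 : g.curry 1 ⟨x, hx⟩ = F (β + Real.exp (x - 1)) + s * F (α + Real.exp (x - 1)) := by
    simp [g]
  rw [e2] at this
  refine this.congr' ?_
  filter_upwards [eventually_ne_atTop 0] with N hN
  rw [hA2 N hN]
  apply Finset.sum_congr rfl
  intro j hj
  have hj' : j ≤ N := by simpa [Nat.lt_succ_iff] using hj
  have hN' : (0:ℝ) < N := by positivity
  rw [dif_pos (show (j:ℝ)/N ∈ I from ⟨by positivity, by
    rw [div_le_one hN']; exact_mod_cast hj'⟩)]
  rfl

lemma F_analytic {F : ℝ → ℝ} (h : Hyp1 F) : AnalyticOnNhd ℝ F Set.univ := by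
  intro x₀ _
  set α := x₀ - Real.exp (1/2 - 1) with hα
  obtain ⟨c, hc⟩ := bern_series h (α := α) (β := |α|) (s := 1) le_rfl (by norm_num)
  obtain ⟨d, hd⟩ := bern_series h (α := α) (β := |α|) (s := -1) le_rfl (by norm_num)
  have hG : ∀ t ∈ Set.Ico (0:ℝ) 1, HasSum (fun m => ((c m - d m)/2) * t ^ m)
      (F (α + Real.exp (t - 1))) := by
    intro t ht
    have := ((hc t ht).sub (hd t ht)).div_const 2
    have e1 : (fun m => (c m * t ^ m - d m * t ^ m) / 2) = fun m => ((c m - d m)/2) * t ^ m := by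
      funext m; ring
    rw [e1] at this
    have e2 : F (α + Real.exp (t - 1)) =
      (F (|α| + Real.exp (t - 1)) + 1 * F (α + Real.exp (t - 1)) -
        (F (|α| + Real.exp (t - 1)) + -1 * F (α + Real.exp (t - 1)))) / 2 := by ring
    rw [e2]
    exact this
  have han := series_analytic (fun m => (c m - d m)/2) 1 one_pos
    (fun r hr => (hG r ⟨r.2, by exact_mod_cast hr⟩).summable)
  have hat : AnalyticAt ℝ (fun y : ℝ => Real.log (y - α) + 1) x₀ := by
    have : AnalyticAt ℝ (fun y : ℝ => Real.log (y - α)) x₀ := by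
      apply AnalyticAt.log
      · fun_prop
      · rw [hα]; simp [Real.exp_pos]
    exact this.add analyticAt_const
  have hv : Real.log (x₀ - α) + 1 = 1/2 := by
    rw [hα, sub_sub_cancel, Real.log_exp]; ring
  have hcomp : AnalyticAt ℝ ((fun x : ℝ => ∑' m, ((c m - d m)/2) * x ^ m) ∘
      (fun y : ℝ => Real.log (y - α) + 1)) x₀ := by
    apply AnalyticAt.comp _ hat
    simp only [hv]
    apply han
    simp
    norm_num [abs_of_pos]
  refine hcomp.congr ?_
  have n1 : ∀ᶠ y in nhds x₀, Real.log (y - α) + 1 ∈ Set.Ioo (0:ℝ) 1 := by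
    apply hat.continuousAt.eventually
    simp only [hv]
    exact Ioo_mem_nhds (by norm_num) (by norm_num)
  have n2 : ∀ᶠ y in nhds x₀, α < y := by
    apply lt_mem_nhds
    rw [hα]; linarith [Real.exp_pos (1/2 - 1)]
  filter_upwards [n1, n2] with y h1 h2
  have := (hG _ ⟨h1.1.le, h1.2⟩).tsum_eq
  simp only [Function.comp]
  rw [this, add_sub_cancel_right, Real.exp_log (by linarith)]
  congr 1; ring



lemma taylor_aux {f : ℝ → ℝ} (hf : ContDiff ℝ ⊤ f) (n : ℕ) {x : ℝ} (hx : 0 < x) :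
    ∃ ξ ∈ Set.Ioo 0 x, f x = ∑ k ∈ Finset.range (n + 1), iteratedDeriv k f 0 / k.factorial * x ^ k
      + iteratedDeriv (n + 1) f ξ * x ^ (n + 1) / (n + 1).factorial := by
  have hf' : ∀ k : ℕ, ContDiff ℝ k f := fun k => hf.of_le (by exact_mod_cast le_top)
  obtain ⟨ξ, h1, h2⟩ := taylor_mean_remainder_lagrange_iteratedDeriv (n := n) hx.ne
    (hf' (n + 1)).contDiffOn
  refine ⟨ξ, by simpa [uIoo_of_lt hx] using h1, ?_⟩
  rw [sub_eq_iff_eq_add, taylor_within_apply] at h2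
  rw [h2, sub_zero, add_comm]
  congr 1
  apply Finset.sum_congr rfl
  intro k _
  rw [iteratedDerivWithin_eq_iteratedDeriv (uniqueDiffOn_uIcc hx.ne) (hf' k).contDiffAt
    left_mem_uIcc, smul_eq_mul]
  field_simp

open Polynomial in
lemma F_deriv_nonneg {F : ℝ → ℝ} (h : Hyp1 F) (hF : ContDiff ℝ ⊤ F) (n : ℕ) {a : ℝ} (ha : 0 ≤ a) :
    0 ≤ iteratedDeriv n F a := by
  rcases n with _ | n
  · simpa using F_nonneg h ha
  have hF' : ∀ k : ℕ, ContDiff ℝ k F := fun k => hF.of_le (by exact_mod_cast le_top)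
  set p : ℝ[X] := ∏ j ∈ Finset.range (n + 1), (X - C ((1/2:ℝ) ^ j)) ^ 2 with hp
  have hpe : ∀ x, p.eval x = ∏ j ∈ Finset.range (n + 1), (x - (1/2:ℝ) ^ j) ^ 2 := by
    intro x; simp [hp, eval_prod]
  have hp0 : ∀ x, 0 ≤ p.eval x := by
    intro x; rw [hpe]; exact Finset.prod_nonneg (fun j _ => sq_nonneg _)
  have hpz : ∀ k ∈ Finset.range (n + 1), p.eval ((1/2:ℝ)^k) = 0 := by
    intro k hk
    rw [hpe]
    exact Finset.prod_eq_zero hk (by simp)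
  have hpp : 0 < p.eval ((1/2:ℝ)^(n + 1)) := by
    rw [hpe]
    apply Finset.prod_pos
    intro j hj
    apply sq_pos_of_ne_zero
    intro heq
    have : (1/2:ℝ)^(n + 1) < (1/2:ℝ) ^ j :=
      pow_lt_pow_right_of_lt_one₀ (by norm_num) (by norm_num) (Finset.mem_range.1 hj)
    linarith
  set φ : ℝ → ℝ := fun b => ∑ k ∈ Finset.range (p.natDegree + 1),
    p.coeff k * F (a + (1/2:ℝ)^k * b) with hφ
  have hφc : ContDiff ℝ ⊤ φ := by
    apply ContDiff.sum
    intro k _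
    exact contDiff_const.mul (hF.comp (by fun_prop))
  have hφ0 : ∀ b, 0 ≤ b → 0 ≤ φ b := by
    intro b hb
    obtain ⟨σ, h1, h2⟩ := two_point h ha hb (u := 1/2) (by norm_num)
    have := poly_nonneg h1 p (Filter.Eventually.of_forall hp0)
    simp only [h2] at this
    simpa only [hφ, mul_comm b] using this
  have hder : ∀ m, iteratedDeriv m φ 0 = p.eval ((1/2:ℝ)^m) * iteratedDeriv m F a := by
    intro m
    have hc : ∀ k : ℕ, ContDiff ℝ m (fun b => F (a + (1/2:ℝ)^k * b)) := fun k =>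
      (hF' m).comp (by fun_prop)
    rw [hφ, iteratedDeriv_fun_sum (fun k _ => (contDiff_const.mul (hc k)).contDiffAt),
      eval_eq_sum_range, Finset.sum_mul]
    apply Finset.sum_congr rfl
    intro k _
    rw [iteratedDeriv_const_mul_field,
      iteratedDeriv_comp_const_mul (f := fun z => F (a + z)) ((hF' m).comp (by fun_prop)),
      iteratedDeriv_comp_const_add]
    simp only [mul_zero, add_zero]
    rw [← pow_mul, ← pow_mul, mul_comm k m]
    ring
  have hmain : 0 ≤ iteratedDeriv (n + 1) φ 0 := by
    by_contra hcon
    push Not at hcon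
    have hcont : Continuous (iteratedDeriv (n + 1) φ) :=
      hφc.continuous_iteratedDeriv (n + 1) (by exact_mod_cast le_top)
    obtain ⟨δ, hδ, hball⟩ := Metric.eventually_nhds_iff.1 (hcont.tendsto 0 (Iio_mem_nhds hcon))
    obtain ⟨ξ, hξ, e⟩ := taylor_aux hφc n hδ
    rw [Finset.sum_eq_zero (fun k hk => by rw [hder, hpz k hk]; simp), zero_add] at e
    have h1 : iteratedDeriv (n + 1) φ ξ < 0 := by
      have := hball (y := ξ) (by rw [Real.dist_eq, sub_zero, abs_of_pos hξ.1]; exact hξ.2)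
      simpa using this
    have h2 : 0 ≤ φ δ := hφ0 δ hδ.le
    rw [e] at h2
    have h3 : 0 < δ ^ (n + 1) / (n + 1).factorial := by positivity
    rw [mul_div_assoc] at h2
    nlinarith
  rw [hder] at hmain
  exact nonneg_of_mul_nonneg_right hmain hpp

lemma one_to_three {F : ℝ → ℝ} (h : Hyp1 F) : AbsolutelyMonotonicEntire F := by
  have han := F_analytic h
  have hF : ContDiff ℝ ⊤ F := by
    rw [contDiff_iff_contDiffAt]
    exact fun x => (han x (Set.mem_univ x)).contDiffAt
  set c : ℕ → ℝ := fun n => iteratedDeriv n F 0 / n.factorial with hc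
  have hc0 : ∀ n, 0 ≤ c n := fun n =>
    div_nonneg (F_deriv_nonneg h hF n le_rfl) (by positivity)
  have hsum0 : ∀ x : ℝ, 0 < x → Summable (fun n => c n * x ^ n) := by
    intro x hx
    apply summable_of_sum_range_le (c := F x)
    · intro n
      exact mul_nonneg (hc0 n) (by positivity)
    · intro n
      rcases n with _ | n
      · simpa using F_nonneg h hx.le
      obtain ⟨ξ, hξ, e⟩ := taylor_aux hF n hx
      rw [e]
      have := F_deriv_nonneg h hF (n + 1) hξ.1.le
      have : 0 ≤ iteratedDeriv (n + 1) F ξ * x ^ (n + 1) / (n + 1).factorial := by positivity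
      linarith
  have hsum : ∀ x : ℝ, Summable (fun n => c n * x ^ n) := by
    intro x
    apply Summable.of_norm_bounded (hsum0 (|x| + 1) (by positivity))
    intro n
    rw [norm_mul, norm_pow, Real.norm_of_nonneg (hc0 n), Real.norm_eq_abs]
    apply mul_le_mul_of_nonneg_left _ (hc0 n)
    apply pow_le_pow_left₀ (abs_nonneg _)
    linarith
  have hS : AnalyticOnNhd ℝ (fun x : ℝ => ∑' n, c n * x ^ n) Set.univ := by
    intro x _
    refine series_analytic c (‖x‖₊ + 1) (by positivity) (fun r _ => hsum r) x ?_
    simp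
  have heq : F = fun x : ℝ => ∑' n, c n * x ^ n := by
    apply han.eq_of_eventuallyEq hS (z₀ := 0)
    have hp := (han 0 (Set.mem_univ 0)).hasFPowerSeriesAt
    filter_upwards [hp.eventually_hasSum] with y hy
    rw [zero_add] at hy
    rw [← hy.tsum_eq]
    apply tsum_congr
    intro n
    rw [FormalMultilinearSeries.ofScalars_apply_eq, smul_eq_mul]
  refine ⟨c, hc0, fun x => ?_⟩
  rw [congrFun heq x]
  exact (hsum x).hasSum



noncomputable def mpow (μ : Measure ℝ) : ℕ → Measure ℝ
  | 0 => Measure.dirac 1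
  | n + 1 => Measure.mconv (mpow μ n) μ

lemma mpow_props {μ : Measure ℝ} (h : IsAdmissible μ) (h1 : ∀ᵐ x ∂μ, |x| ≤ 1) (n : ℕ) :
    IsAdmissible (mpow μ n) ∧ (∀ᵐ x ∂(mpow μ n), |x| ≤ 1) ∧
      ∀ k, moment (mpow μ n) k = moment μ k ^ n := by
  have := adm_finite h
  induction n with
  | zero =>
    refine ⟨fun k => integrable_dirac (by simp), ?_, fun k => ?_⟩
    · simp only [mpow]
      rw [ae_dirac_iff (measurableSet_le measurable_abs measurable_const)]
      simp
    · simp [mpow, moment]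
  | succ n ih =>
    obtain ⟨i1, i2, i3⟩ := ih
    have := adm_finite i1
    have hm : AEMeasurable (fun x : ℝ × ℝ => x.1 * x.2) ((mpow μ n).prod μ) := by fun_prop
    refine ⟨fun k => ?_, ?_, fun k => ?_⟩
    · simp only [mpow, Measure.mconv]
      rw [integrable_map_measure (by fun_prop) hm]
      have := (i1 k).mul_prod (h k)
      refine this.congr (Filter.Eventually.of_forall (fun z => ?_))
      simp [mul_pow]
    · simp only [mpow, Measure.mconv]
      rw [ae_map_iff hm (measurableSet_le measurable_abs measurable_const)]
      have e1 : ∀ᵐ z ∂((mpow μ n).prod μ), |z.1| ≤ 1 := Measure.quasiMeasurePreserving_fst.ae i2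
      have e2 : ∀ᵐ z ∂((mpow μ n).prod μ), |z.2| ≤ 1 := Measure.quasiMeasurePreserving_snd.ae h1
      filter_upwards [e1, e2] with z h1 h2
      rw [abs_mul]
      exact mul_le_one₀ h1 (abs_nonneg _) h2
    · rw [pow_succ, ← i3 k]
      simp only [moment, mpow, Measure.mconv]
      rw [integral_map hm (by fun_prop), ← integral_prod_mul]
      simp [mul_pow]

lemma three_to_two {F : ℝ → ℝ} (h : AbsolutelyMonotonicEntire F) :
    ∀ s ∈ momentSet (Set.Icc (-1 : ℝ) 1),
          (fun k => F (s k)) ∈ momentSet (Set.univ : Set ℝ) := by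
  rintro s ⟨μ, hμ, hsupp, hs⟩
  obtain ⟨c, hc0, hc⟩ := h
  have h1 : ∀ᵐ x ∂μ, |x| ≤ 1 := by
    have : ∀ᵐ x ∂μ, x ∈ Set.Icc (-1:ℝ) 1 := by
      rw [ae_iff]; exact hsupp
    filter_upwards [this] with x hx
    exact abs_le.2 hx
  have hp := mpow_props hμ h1
  have hint : ∀ k : ℕ, Integrable (fun x : ℝ => x ^ k)
      (Measure.sum (fun n => ENNReal.ofReal (c n) • mpow μ n)) := by
    intro k
    apply integrable_sum_measure
    · intro n
      exact ((hp n).1 k).smul_measure ENNReal.ofReal_ne_top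
    · refine Summable.of_nonneg_of_le (fun n => integral_nonneg (fun x => norm_nonneg _)) ?_
        (hc (s 0)).summable
      intro n
      rw [integral_smul_measure, ENNReal.toReal_ofReal (hc0 n), smul_eq_mul, hs 0,
        ← (hp n).2.2 0]
      apply mul_le_mul_of_nonneg_left _ (hc0 n)
      unfold moment
      apply integral_mono_ae ((hp n).1 k).norm ((hp n).1 0)
      filter_upwards [(hp n).2.1] with x hx
      simp only [norm_pow, Real.norm_eq_abs, pow_zero]
      exact pow_le_one₀ (abs_nonneg _) hx
  refine ⟨_, hint, by simp, fun k => ?_⟩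
  have a1 := hasSum_integral_measure (hint k)
  have a2 := hc (s k)
  have e : (fun n => ∫ x, x ^ k ∂(ENNReal.ofReal (c n) • mpow μ n)) = fun n => c n * s k ^ n := by
    funext n
    rw [integral_smul_measure, ENNReal.toReal_ofReal (hc0 n), smul_eq_mul, hs k, ← (hp n).2.2 k]
    rfl
  rw [e] at a1
  exact a2.unique a1


/-- A function maps `M([-1,1])` into `M(ℝ)` entrywise iff it does so on the moment
sequences of measures supported on three points `{-1, u, 1}`, iff it is the restriction
of an absolutely monotonic entire function. -/
theorem moment_transform_three_point_TFAE (F : ℝ → ℝ) :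
    List.TFAE
      [∀ u ∈ Set.Ioo (0 : ℝ) 1, ∀ s ∈ momentSet ({-1, u, 1} : Set ℝ),
          (fun k => F (s k)) ∈ momentSet (Set.univ : Set ℝ),
        ∀ s ∈ momentSet (Set.Icc (-1 : ℝ) 1),
          (fun k => F (s k)) ∈ momentSet (Set.univ : Set ℝ),
        AbsolutelyMonotonicEntire F] := by
  tfae_have 1 → 3 := fun h => one_to_three h
  tfae_have 3 → 2 := fun h => three_to_two h
  tfae_have 2 → 1 := by
    intro h u hu s hs
    obtain ⟨μ, h1, h2, h3⟩ := hs
    refine h s ⟨μ, h1, measure_mono_null (Set.compl_subset_compl.2 ?_) h2, h3⟩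
    intro x hx
    simp only [Set.mem_insert_iff, Set.mem_singleton_iff] at hx
    rcases hx with rfl | rfl | rfl
    · constructor <;> norm_num
    · exact ⟨by linarith [hu.1], hu.2.le⟩
    · constructor <;> norm_num
  tfae_finish
end

section
/- Let ρ ∈ (0,∞) and let F : [0,ρ] → ℝ. The following are equivalent: (1) for every positive semidefinite Hankel matrix of any finite size with entries in [0,ρ], applying F entrywise yields a positive semidefinite matrix; (2) F is absolutely monotonic on [0,ρ) — i.e., F is continuous on [0,ρ), infinitely differentiable on (0,ρ), and F^{(k)}(x) ≥ 0 for all x ∈ (0,ρ) and all k ≥ 0 — and F(ρ) ≥ lim_{x→ρ⁻} F(x); (3) for every positive semidefinite matrix of any finite size with entries in [0,ρ], applying F entrywise yields a positive semidefinite matrix. If instead F : [0,ρ) → ℝ, the same equivalences hold with (2) replaced by: F is absolutely monotonic on [0,ρ). -/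
open Filter Set

/-- A Hankel matrix: the `(i,j)` entry depends only on `i + j`. -/
def IsHankelMat {n : ℕ} (A : Matrix (Fin n) (Fin n) ℝ) : Prop :=
  ∀ i j k l : Fin n, (i : ℕ) + (j : ℕ) = (k : ℕ) + (l : ℕ) → A i j = A k l

/-- Absolute monotonicity on `[0, ρ)`: continuity on `[0, ρ)`, smoothness on `(0, ρ)`,
and non-negativity of all derivatives there. -/
def AbsMonOnIco (F : ℝ → ℝ) (ρ : ℝ) : Prop :=
  ContinuousOn F (Set.Ico 0 ρ) ∧ ContDiffOn ℝ (⊤ : ℕ∞) F (Set.Ioo 0 ρ) ∧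
    ∀ k : ℕ, ∀ x ∈ Set.Ioo (0 : ℝ) ρ, 0 ≤ iteratedDerivWithin k F (Set.Ioo 0 ρ) x


lemma psd_iff_form {n : ℕ} (A : Matrix (Fin n) (Fin n) ℝ) :
    A.PosSemidef ↔ (∀ i j, A i j = A j i) ∧
      ∀ x : Fin n → ℝ, 0 ≤ ∑ i, ∑ j, x i * x j * A i j := by
  rw [Matrix.posSemidef_iff_dotProduct_mulVec]
  refine and_congr ?_ ?_
  · rw [Matrix.IsHermitian.ext_iff]
    constructor
    · intro h i j
      simpa using (h i j).symm
    · intro h i j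
      simpa using (h i j).symm
  · refine forall_congr' fun x => ?_
    have : star x ⬝ᵥ A.mulVec x = ∑ i, ∑ j, x i * x j * A i j := by
      simp only [dotProduct, Matrix.mulVec, Finset.mul_sum]
      refine Finset.sum_congr rfl fun i _ => Finset.sum_congr rfl fun j _ => ?_
      simp; ring
    rw [this]

lemma psd_limit {ι : Type*} {l : Filter ι} [l.NeBot] {n : ℕ}
    {B : ι → Matrix (Fin n) (Fin n) ℝ} {A : Matrix (Fin n) (Fin n) ℝ}
    (hB : ∀ᶠ t in l, (B t).PosSemidef)
    (h : ∀ i j, Tendsto (fun t => B t i j) l (nhds (A i j))) : A.PosSemidef := by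
  rw [psd_iff_form]
  constructor
  · intro i j
    refine tendsto_nhds_unique_of_eventuallyEq (h i j) (h j i) ?_
    filter_upwards [hB] with t ht
    exact ((psd_iff_form _).1 ht).1 i j
  · intro x
    refine ge_of_tendsto (f := fun t => ∑ i, ∑ j, x i * x j * B t i j) (x := l) ?_ ?_
    · exact tendsto_finsetSum _ fun i _ => tendsto_finsetSum _ fun j _ => (h i j).const_mul _
    · filter_upwards [hB] with t ht
      exact ((psd_iff_form _).1 ht).2 x

lemma psd_ones {n : ℕ} : (Matrix.of fun _ _ => 1 : Matrix (Fin n) (Fin n) ℝ).PosSemidef := by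
  rw [psd_iff_form]
  refine ⟨fun _ _ => rfl, fun x => ?_⟩
  have : ∑ i, ∑ j, x i * x j * (Matrix.of fun _ _ => 1 : Matrix (Fin n) (Fin n) ℝ) i j
      = (∑ i, x i) * (∑ i, x i) := by
    rw [Finset.sum_mul_sum]; simp
  rw [this]; exact mul_self_nonneg _

lemma psd_pow {n : ℕ} {A : Matrix (Fin n) (Fin n) ℝ} (hA : A.PosSemidef) (k : ℕ) :
    (A.map (fun x => x ^ k)).PosSemidef := by
  induction k with
  | zero => 
    have : A.map (fun x => x ^ 0) = Matrix.of fun _ _ => 1 := by ext; simp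
    rw [this]; exact psd_ones
  | succ k ih =>
    have := ih.hadamard hA
    have e : A.map (fun x => x ^ (k+1)) = Matrix.hadamard (A.map (fun x => x ^ k)) A := by
      ext i j; simp [Matrix.hadamard, pow_succ]
    rw [e]; exact this

lemma psd_series {n : ℕ} {A : Matrix (Fin n) (Fin n) ℝ} (hA : A.PosSemidef)
    {c : ℕ → ℝ} (hc : ∀ k, 0 ≤ c k) {G : ℝ → ℝ}
    (hG : ∀ i j, HasSum (fun k => c k * A i j ^ k) (G (A i j))) : (A.map G).PosSemidef := by
  refine psd_limit (l := atTop)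
    (B := fun N => ∑ k ∈ Finset.range N, c k • A.map (fun x => x ^ k)) ?_ ?_
  · refine Eventually.of_forall fun N => ?_
    exact Matrix.posSemidef_sum _ fun k _ => (psd_pow hA k).smul (hc k)
  · intro i j
    have := (hG i j).tendsto_sum_nat
    simpa [Matrix.sum_apply] using this

lemma nonneg_of_deriv {D D' : ℝ → ℝ} {T : ℝ} (h : ∀ t ∈ Ico 0 T, HasDerivAt D (D' t) t)
    (h' : ∀ t ∈ Ico 0 T, 0 ≤ D' t) (h0 : 0 ≤ D 0) : ∀ t ∈ Ico 0 T, 0 ≤ D t := by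
  intro t ht
  have : MonotoneOn D (Icc 0 t) := by
    refine monotoneOn_of_hasDerivWithinAt_nonneg (f' := D') (convex_Icc _ _) ?_ ?_ ?_
    · intro s hs
      exact (h s ⟨hs.1, hs.2.trans_lt ht.2⟩).continuousAt.continuousWithinAt
    · intro s hs
      have hs := interior_subset hs
      exact (h s ⟨hs.1, hs.2.trans_lt ht.2⟩).hasDerivWithinAt
    · intro s hs
      have hs := interior_subset hs
      exact h' s ⟨hs.1, hs.2.trans_lt ht.2⟩
  exact h0.trans (this (by simp [ht.1]) (by simp [ht.1]) ht.1)

section bernstein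

variable {f : ℕ → ℝ → ℝ} {a T : ℝ}

lemma remainder_deriv (hd : ∀ k, ∀ t ∈ Ico 0 T, HasDerivAt (f k) (f (k+1) (a+t)) (a + t))
    (n k : ℕ) (t : ℝ) (ht : t ∈ Ico 0 T) :
    HasDerivAt (fun t => f k (a+t) - ∑ i ∈ Finset.range (n+1), f (k+i) a * (t^i / (i.factorial : ℝ)))
      (f (k+1) (a+t) - ∑ i ∈ Finset.range n, f (k+1+i) a * (t^i / (i.factorial : ℝ))) t := by
  refine HasDerivAt.sub ?_ ?_
  · exact (hd k t ht).comp_const_add a t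
  · have : (fun t : ℝ => ∑ i ∈ Finset.range (n+1), f (k+i) a * (t^i / (i.factorial : ℝ)))
       = fun t => (∑ i ∈ Finset.range n, f (k+(i+1)) a * (t^(i+1) / ((i+1).factorial : ℝ))) + f k a := by
      ext t; rw [Finset.sum_range_succ']; simp
    rw [this]
    refine HasDerivAt.add_const _ ?_
    refine HasDerivAt.fun_sum fun i _ => ?_
    have h1 := ((hasDerivAt_pow (i+1) t).div_const ((i+1).factorial : ℝ)).const_mul (f (k+(i+1)) a)
    refine h1.congr_deriv ?_
    rw [Nat.factorial_succ, show k + 1 + i = k + (i+1) by ring]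
    have : (i.factorial : ℝ) ≠ 0 := by positivity
    push_cast
    have h2 : (i : ℝ) + 1 ≠ 0 := by positivity
    field_simp

lemma remainder_nonneg (hd : ∀ k, ∀ t ∈ Ico 0 T, HasDerivAt (f k) (f (k+1) (a+t)) (a + t))
    (hn : ∀ k, ∀ t ∈ Ico 0 T, 0 ≤ f k (a+t)) (n : ℕ) : ∀ k, ∀ t ∈ Ico 0 T,
    0 ≤ f k (a+t) - ∑ i ∈ Finset.range n, f (k+i) a * (t^i / (i.factorial : ℝ)) := by
  induction n with
  | zero => intro k t ht; simpa using hn k t ht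
  | succ n ih =>
    intro k
    refine nonneg_of_deriv (fun t ht => remainder_deriv hd n k t ht) (ih (k+1)) ?_
    rw [Finset.sum_range_succ']; simp

lemma remainder_mono (hd : ∀ k, ∀ t ∈ Ico 0 T, HasDerivAt (f k) (f (k+1) (a+t)) (a + t))
    (hn : ∀ k, ∀ t ∈ Ico 0 T, 0 ≤ f k (a+t)) {θ : ℝ} (h0 : 0 ≤ θ) (h1 : θ ≤ 1) (n : ℕ) :
    ∀ k, ∀ t ∈ Ico 0 T,
    0 ≤ θ ^ n * (f k (a+t) - ∑ i ∈ Finset.range n, f (k+i) a * (t^i / (i.factorial : ℝ)))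
      - (f k (a+θ*t) - ∑ i ∈ Finset.range n, f (k+i) a * ((θ*t)^i / (i.factorial : ℝ))) := by
  have hθ : ∀ t ∈ Ico 0 T, θ * t ∈ Ico 0 T := fun t ht =>
    ⟨mul_nonneg h0 ht.1, (mul_le_of_le_one_left ht.1 h1).trans_lt ht.2⟩
  induction n with
  | zero =>
    intro k t ht
    have : MonotoneOn (fun t => f k (a+t)) (Ico 0 T) := by
      refine monotoneOn_of_hasDerivWithinAt_nonneg (f' := fun t => f (k+1) (a+t)) (convex_Ico _ _) ?_ ?_ ?_
      · intro s hs
        exact ((hd k s hs).comp_const_add a s).continuousAt.continuousWithinAt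
      · intro s hs
        exact ((hd k s (interior_subset hs)).comp_const_add a s).hasDerivWithinAt
      · intro s hs
        exact hn _ s (interior_subset hs)
    have := this (hθ t ht) ht (mul_le_of_le_one_left ht.1 h1)
    simpa using this
  | succ n ih =>
    intro k
    refine nonneg_of_deriv (D' := fun t => θ * (θ ^ n * (f (k+1) (a+t) - ∑ i ∈ Finset.range n, f (k+1+i) a * (t^i / (i.factorial : ℝ)))
      - (f (k+1) (a+θ*t) - ∑ i ∈ Finset.range n, f (k+1+i) a * ((θ*t)^i / (i.factorial : ℝ))))) ?_ ?_ ?_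
    · intro t ht
      have e1 := (remainder_deriv hd n k t ht).const_mul (θ^(n+1))
      have e2 := (remainder_deriv hd n k (θ*t) (hθ t ht)).comp t ((hasDerivAt_id t).const_mul θ)
      have := e1.sub e2
      refine this.congr_deriv ?_
      simp only [mul_one]; ring
    · intro t ht
      exact mul_nonneg h0 (ih (k+1) t ht)
    · rw [Finset.sum_range_succ', Finset.sum_range_succ']; simp

lemma bernstein_hasSum (hd : ∀ k, ∀ t ∈ Ico 0 T, HasDerivAt (f k) (f (k+1) (a+t)) (a + t))
    (hn : ∀ k, ∀ t ∈ Ico 0 T, 0 ≤ f k (a+t)) {s : ℝ} (hs : s ∈ Ico 0 T) :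
    HasSum (fun k => f k a / (k.factorial : ℝ) * s ^ k) (f 0 (a+s)) := by
  obtain ⟨t, hst, htT⟩ := exists_between hs.2
  have ht0 : 0 < t := hs.1.trans_lt hst
  have haT : ∀ k, 0 ≤ f k a := fun k => by
    simpa using hn k 0 ⟨le_rfl, hs.1.trans_lt hs.2⟩
  rw [hasSum_iff_tendsto_nat_of_nonneg]
  swap
  · intro k; have := haT k; have := hs.1; positivity
  set θ := s / t with hθ
  have hθ0 : 0 ≤ θ := div_nonneg hs.1 ht0.le
  have hθ1 : θ < 1 := (div_lt_one ht0).2 hst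
  have hθt : θ * t = s := by rw [hθ]; field_simp
  have key : Tendsto (fun n => f 0 (a+s) - ∑ i ∈ Finset.range n, f i a / (i.factorial : ℝ) * s ^ i)
      atTop (nhds 0) := by
    refine squeeze_zero (g := fun n => θ ^ n * f 0 (a+t)) ?_ ?_ ?_
    · intro n
      have := remainder_nonneg hd hn n 0 s hs
      simpa [div_mul_eq_mul_div, mul_div_assoc] using this
    · intro n
      have h1 := remainder_mono hd hn hθ0 hθ1.le n 0 t ⟨ht0.le, htT⟩
      rw [hθt] at h1
      have h2 : 0 ≤ ∑ i ∈ Finset.range n, f (0+i) a * (t^i / (i.factorial : ℝ)) :=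
        Finset.sum_nonneg fun i _ => mul_nonneg (haT _) (by positivity)
      have h3 : 0 ≤ θ ^ n * ∑ i ∈ Finset.range n, f (0+i) a * (t^i / (i.factorial : ℝ)) := by
        positivity
      have h4 : ∑ i ∈ Finset.range n, f i a / (i.factorial : ℝ) * s ^ i =
        ∑ i ∈ Finset.range n, f (0+i) a * (s^i / (i.factorial : ℝ)) :=
        Finset.sum_congr rfl fun i _ => by rw [zero_add]; ring
      rw [h4]
      linarith
    · simpa using (tendsto_pow_atTop_nhds_zero_of_lt_one hθ0 hθ1).mul_const (f 0 (a+t))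
  have := (tendsto_const_nhds (x := f 0 (a+s))).sub key
  simpa using this

end bernstein

lemma absMon_hasSum {F : ℝ → ℝ} {ρ : ℝ} (h : AbsMonOnIco F ρ) {δ : ℝ} (hδ : 0 < δ) :
    ∃ c : ℕ → ℝ, (∀ k, 0 ≤ c k) ∧ ∀ x ∈ Ico 0 (ρ - δ), HasSum (fun k => c k * x ^ k) (F (δ + x)) := by
  obtain ⟨-, h2, h3⟩ := h
  by_cases hρ : δ < ρ
  swap
  · exact ⟨0, fun k => le_rfl, fun x hx => by have := hx.1; have := hx.2; linarith⟩
  refine ⟨fun k => iteratedDerivWithin k F (Ioo 0 ρ) δ / (k.factorial : ℝ),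
    fun k => div_nonneg (h3 k δ ⟨hδ, hρ⟩) (by positivity), fun x hx => ?_⟩
  have hm : ∀ t ∈ Ico 0 (ρ - δ), δ + t ∈ Ioo 0 ρ := fun t ht =>
    ⟨by linarith [ht.1], by linarith [ht.2]⟩
  have := bernstein_hasSum (f := fun k => iteratedDerivWithin k F (Ioo 0 ρ)) (a := δ) (T := ρ - δ)
    ?_ (fun k t ht => h3 k _ (hm t ht)) hx
  · simpa using this
  · intro k t ht
    have hd := h2.differentiableOn_iteratedDerivWithin (m := k) (by exact_mod_cast WithTop.coe_lt_top _)
      (uniqueDiffOn_Ioo 0 ρ)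
    have hd' := (hd _ (hm t ht)).hasDerivWithinAt.hasDerivAt (isOpen_Ioo.mem_nhds (hm t ht))
    rw [iteratedDerivWithin_succ]
    exact hd'

lemma open_two_three {F : ℝ → ℝ} {ρ : ℝ} (h : AbsMonOnIco F ρ) (n : ℕ)
    (A : Matrix (Fin n) (Fin n) ℝ) (hA : ∀ i j, A i j ∈ Set.Ico 0 ρ) (hP : A.PosSemidef) :
    (A.map F).PosSemidef := by
  refine psd_limit (l := nhdsWithin 0 (Ioi 0)) (B := fun δ => A.map (fun x => F (δ + x))) ?_ ?_
  · have h1 : ∀ᶠ δ in nhdsWithin (0:ℝ) (Ioi 0), ∀ i j, A i j < ρ - δ := by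
      rw [eventually_all]; intro i
      rw [eventually_all]; intro j
      have : ∀ᶠ δ in nhds (0:ℝ), A i j < ρ - δ := by
        refine Tendsto.eventually_const_lt (v := ρ - 0) (by simpa using (hA i j).2) ?_
        exact Continuous.tendsto (by fun_prop) 0
      exact this.filter_mono nhdsWithin_le_nhds
    filter_upwards [h1, self_mem_nhdsWithin] with δ h2 hδ
    obtain ⟨c, hc, hs⟩ := absMon_hasSum h (δ := δ) hδ
    exact psd_series hP hc (G := fun x => F (δ + x)) fun i j => hs _ ⟨(hA i j).1, h2 i j⟩
  · intro i j
    have hc := h.1 _ (hA i j)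
    refine Tendsto.comp (y := nhdsWithin (A i j) (Ico 0 ρ)) hc ?_
    refine tendsto_nhdsWithin_iff.2 ⟨?_, ?_⟩
    · have : Tendsto (fun δ : ℝ => δ + A i j) (nhds 0) (nhds (0 + A i j)) :=
        Continuous.tendsto (by fun_prop) 0
      rw [zero_add] at this
      exact this.mono_left nhdsWithin_le_nhds
    · have : ∀ᶠ δ in nhds (0:ℝ), δ + A i j < ρ := by
        refine Tendsto.eventually_lt_const (v := 0 + A i j) (by simpa using (hA i j).2) ?_
        exact Continuous.tendsto (by fun_prop) 0
      filter_upwards [this.filter_mono nhdsWithin_le_nhds, self_mem_nhdsWithin] with δ h1 h2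
      exact ⟨add_nonneg (le_of_lt h2) (hA i j).1, h1⟩

lemma closed_two_three {F : ℝ → ℝ} {ρ : ℝ} (hρ : 0 < ρ) (h : AbsMonOnIco F ρ)
    {L : ℝ} (hL : Tendsto F (nhdsWithin ρ (Set.Iio ρ)) (nhds L)) (hLF : L ≤ F ρ) (n : ℕ)
    (A : Matrix (Fin n) (Fin n) ℝ) (hA : ∀ i j, A i j ∈ Set.Icc 0 ρ) (hP : A.PosSemidef) :
    (A.map F).PosSemidef := by
  have ht : ∀ k : ℕ, (0:ℝ) < 1 - 1 / (k + 2) ∧ (1 - 1 / (k + 2) : ℝ) < 1 := by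
    intro k
    have h1 : (0:ℝ) < 1 / (k+2) := by positivity
    have h2 : (1:ℝ) / (k+2) < 1 := by
      rw [div_lt_one (by positivity)]; linarith [(Nat.cast_nonneg k : (0:ℝ) ≤ k)]
    constructor <;> linarith
  have htl : Tendsto (fun k : ℕ => (1 - 1 / (k + 2) : ℝ)) atTop (nhds 1) := by
    have h1 : Tendsto (fun k : ℕ => (1 / ((k:ℝ) + 2) : ℝ)) atTop (nhds 0) := by
      have := (tendsto_one_div_add_atTop_nhds_zero_nat (𝕜 := ℝ)).comp (tendsto_add_atTop_nat 1)
      refine this.congr fun k => ?_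
      simp; ring
    simpa using h1.const_sub 1
  set t : ℕ → ℝ := fun k => (1 - 1 / (k + 2) : ℝ) with htdef
  refine psd_limit (l := atTop) (B := fun k => (((t k) • A).map F)
    + (F ρ - L) • ((ρ⁻¹ • A).map (fun x => x ^ k))) ?_ ?_
  · refine Eventually.of_forall fun k => ?_
    refine Matrix.PosSemidef.add ?_ ((psd_pow (hP.smul (inv_nonneg.2 hρ.le)) k).smul (sub_nonneg.2 hLF))
    refine open_two_three h n _ ?_ (hP.smul (ht k).1.le)
    intro i j
    simp only [Matrix.smul_apply, smul_eq_mul]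
    refine ⟨mul_nonneg (ht k).1.le (hA i j).1, ?_⟩
    calc t k * A i j ≤ t k * ρ := mul_le_mul_of_nonneg_left (hA i j).2 (ht k).1.le
      _ < 1 * ρ := mul_lt_mul_of_pos_right (ht k).2 hρ
      _ = ρ := one_mul _
  · intro i j
    simp only [Matrix.add_apply, Matrix.smul_apply, Matrix.map_apply, smul_eq_mul]
    have hm : Tendsto (fun k => t k * A i j) atTop (nhds (A i j)) := by
      simpa using htl.mul_const (A i j)
    rcases (hA i j).2.lt_or_eq with hlt | heq
    · have e1 : Tendsto (fun k => F (t k * A i j)) atTop (nhds (F (A i j))) := by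
        refine Tendsto.comp (y := nhdsWithin (A i j) (Ico 0 ρ)) (h.1 _ ⟨(hA i j).1, hlt⟩) ?_
        refine tendsto_nhdsWithin_iff.2 ⟨hm, Eventually.of_forall fun k => ?_⟩
        refine ⟨mul_nonneg (ht k).1.le (hA i j).1, lt_of_le_of_lt ?_ hlt⟩
        exact mul_le_of_le_one_left (hA i j).1 (ht k).2.le
      have e2 : Tendsto (fun k : ℕ => (ρ⁻¹ * A i j) ^ k) atTop (nhds 0) := by
        refine tendsto_pow_atTop_nhds_zero_of_lt_one ?_ ?_
        · exact mul_nonneg (inv_nonneg.2 hρ.le) (hA i j).1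
        · rw [inv_mul_lt_iff₀ hρ]; simpa using hlt
      simpa using e1.add (e2.const_mul (F ρ - L))
    · rw [heq] at hm ⊢
      have e1 : Tendsto (fun k => F (t k * ρ)) atTop (nhds L) := by
        refine hL.comp (tendsto_nhdsWithin_iff.2 ⟨hm, Eventually.of_forall fun k => ?_⟩)
        have := mul_lt_mul_of_pos_right (ht k).2 hρ
        rw [one_mul] at this
        exact this
      rw [inv_mul_cancel₀ hρ.ne']
      simpa using e1.add_const (F ρ - L)

/-! power series -/

lemma pow_aux {s d : ℝ} (hs : 0 ≤ s) (hd : 0 ≤ d) (k : ℕ) :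
    (k+1) * s^k * d + s^(k+1) ≤ (s+d)^(k+1) := by
  induction k with
  | zero => simp; linarith
  | succ k ih =>
    have h1 := mul_le_mul_of_nonneg_left ih (add_nonneg hs hd)
    have h2 : 0 ≤ ((k:ℝ)+1) * s^k * d^2 := by positivity
    push_cast
    calc _ ≤ (s+d) * ((k+1) * s^k * d + s^(k+1)) := by
          have : (s+d) * ((k+1) * s^k * d + s^(k+1)) = ((k:ℝ)+1+1) * s^(k+1) * d + s^(k+1+1) + (k+1) * s^k * d^2 := by ring
          linarith
      _ ≤ (s+d) * (s+d)^(k+1) := h1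
      _ = _ := by ring

lemma ps_summable {c : ℕ → ℝ} {r : ℝ} (hc : ∀ k, 0 ≤ c k)
    (hs : ∀ s ∈ Ico 0 r, Summable fun k => c k * s ^ k) :
    ∀ s ∈ Ico 0 r, Summable fun k : ℕ => ((k:ℝ)+1) * c (k+1) * s ^ k := by
  intro s h
  obtain ⟨t, h1, h2⟩ := exists_between h.2
  have h3 := (summable_nat_add_iff 1).2 (hs t ⟨h.1.trans h1.le, h2⟩)
  have hd : 0 < t - s := by linarith
  refine Summable.of_nonneg_of_le (fun k => ?_) (fun k => ?_) (h3.mul_left (t-s)⁻¹)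
  · have := hc (k+1); have := h.1; positivity
  · rw [← div_eq_inv_mul, le_div_iff₀ hd]
    have := pow_aux h.1 hd.le k
    rw [show s + (t - s) = t by ring] at this
    have h4 := mul_le_mul_of_nonneg_left this (hc (k+1))
    have h5 : 0 ≤ c (k+1) * s^(k+1) := mul_nonneg (hc _) (pow_nonneg h.1 _)
    nlinarith

lemma ps_hasDerivAt {c : ℕ → ℝ} {r : ℝ} (hc : ∀ k, 0 ≤ c k)
    (hs : ∀ s ∈ Ico 0 r, Summable fun k => c k * s ^ k) {x : ℝ} (hx : |x| < r) :
    HasDerivAt (fun x => ∑' k, c k * x ^ k) (∑' k : ℕ, ((k:ℝ)+1) * c (k+1) * x ^ k) x := by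
  obtain ⟨s, h1, h2⟩ := exists_between hx
  have hs0 : 0 < s := (abs_nonneg x).trans_lt h1
  have hsum := ps_summable hc hs s ⟨hs0.le, h2⟩
  have hsum' : Summable fun k : ℕ => c k * (k * s ^ (k-1)) := by
    rw [← summable_nat_add_iff 1]
    refine hsum.congr fun k => ?_
    push_cast; ring
  have hb : ∀ (n : ℕ) (y : ℝ), y ∈ Ioo (-s) s → ‖c n * (n * y ^ (n-1))‖ ≤ c n * (n * s ^ (n-1)) := by
    intro n y hy
    rw [norm_mul, norm_mul, norm_pow, Real.norm_of_nonneg (hc n), Real.norm_natCast]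
    refine mul_le_mul_of_nonneg_left (mul_le_mul_of_nonneg_left ?_ (Nat.cast_nonneg n)) (hc n)
    exact pow_le_pow_left₀ (norm_nonneg _) (abs_lt.2 hy).le _
  have := hasDerivAt_tsum_of_isPreconnected (g := fun k x => c k * x ^ k)
    (g' := fun k x => c k * (k * x ^ (k-1))) (y₀ := 0) (y := x) hsum' isOpen_Ioo
    isPreconnected_Ioo (fun n y _ => (hasDerivAt_pow n y).const_mul (c n)) hb
    ⟨by linarith, hs0⟩ (hs 0 ⟨le_rfl, hs0.trans h2⟩) (abs_lt.1 h1)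
  refine this.congr_deriv ?_
  have hsx : Summable fun k : ℕ => c k * (k * x ^ (k-1)) :=
    Summable.of_norm_bounded hsum' fun n => hb n x (abs_lt.1 h1)
  rw [hsx.tsum_eq_zero_add]
  simp
  refine tsum_congr fun k => by ring

/-- Coefficients of the iterated derivatives of a power series. -/
def psCoeff (c : ℕ → ℝ) : ℕ → ℕ → ℝ
  | 0 => c
  | n+1 => fun k => ((k:ℝ)+1) * psCoeff c n (k+1)

lemma psCoeff_props {c : ℕ → ℝ} {r : ℝ} (hc : ∀ k, 0 ≤ c k)
    (hs : ∀ s ∈ Ico 0 r, Summable fun k => c k * s ^ k) (n : ℕ) :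
    (∀ k, 0 ≤ psCoeff c n k) ∧ ∀ s ∈ Ico 0 r, Summable fun k => psCoeff c n k * s ^ k := by
  induction n with
  | zero => exact ⟨hc, hs⟩
  | succ n ih =>
    refine ⟨fun k => mul_nonneg (by positivity) (ih.1 _), ?_⟩
    exact ps_summable ih.1 ih.2

lemma seq_iteratedDeriv {f : ℕ → ℝ → ℝ} {S : Set ℝ} (hS : IsOpen S)
    (hd : ∀ k, ∀ x ∈ S, HasDerivAt (f k) (f (k+1) x) x) (k : ℕ) :
    ∀ x ∈ S, iteratedDeriv k (f 0) x = f k x := by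
  induction k with
  | zero => intro x _; simp
  | succ k ih =>
    intro x hx
    rw [iteratedDeriv_succ]
    have : iteratedDeriv k (f 0) =ᶠ[nhds x] f k := by
      filter_upwards [hS.mem_nhds hx] with y hy using ih y hy
    rw [this.deriv_eq]
    exact (hd k x hx).deriv

lemma seq_contDiffOn {f : ℕ → ℝ → ℝ} {S : Set ℝ} (hS : IsOpen S)
    (hd : ∀ k, ∀ x ∈ S, HasDerivAt (f k) (f (k+1) x) x) : ContDiffOn ℝ (⊤ : ℕ∞) (f 0) S := by
  refine contDiffOn_of_differentiableOn_deriv fun m _ => ?_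
  have : EqOn (iteratedDerivWithin m (f 0) S) (f m) S := by
    intro x hx
    rw [iteratedDerivWithin_of_isOpen hS hx]
    exact seq_iteratedDeriv hS hd m x hx
  refine DifferentiableOn.congr (f := f m) ?_ this
  exact fun x hx => (hd m x hx).differentiableAt.differentiableWithinAt

lemma absMon_of_local {F : ℝ → ℝ} {ρ : ℝ}
    (h : ∀ r ∈ Ioo 0 ρ, ∃ c : ℕ → ℝ, (∀ k, 0 ≤ c k) ∧
      ∀ x ∈ Ico 0 r, HasSum (fun k => c k * x ^ k) (F x)) : AbsMonOnIco F ρ := by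
  have key : ∀ x ∈ Ico 0 ρ, ∃ r, x < r ∧ ∃ f : ℕ → ℝ → ℝ,
      (∀ k, ∀ y, |y| < r → HasDerivAt (f k) (f (k+1) y) y) ∧ (∀ k, ∀ y ∈ Ico 0 r, 0 ≤ f k y) ∧
      ∀ y ∈ Ico 0 r, F y = f 0 y := by
    intro x hx
    obtain ⟨r, h1, h2⟩ := exists_between hx.2
    obtain ⟨c, hc, hs⟩ := h r ⟨hx.1.trans_lt h1, h2⟩
    have hp := psCoeff_props (r := r) hc (fun s hs' => (hs s hs').summable)
    refine ⟨r, h1, fun n x => ∑' k, psCoeff c n k * x ^ k, ?_, ?_, ?_⟩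
    · intro k y hy
      exact ps_hasDerivAt (hp k).1 (hp k).2 hy
    · intro k y hy
      exact tsum_nonneg fun i => mul_nonneg ((hp k).1 i) (pow_nonneg hy.1 _)
    · intro y hy
      exact (hs y hy).tsum_eq.symm
  refine ⟨?_, ?_, ?_⟩
  · intro x hx
    obtain ⟨r, hr, f, h1, h2, h3⟩ := key x hx
    have hc : ContinuousWithinAt (f 0) (Ico 0 ρ) x :=
      (h1 0 x (by rwa [abs_of_nonneg hx.1])).continuousAt.continuousWithinAt
    refine hc.congr_of_eventuallyEq ?_ (h3 x ⟨hx.1, hr⟩)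
    filter_upwards [self_mem_nhdsWithin, nhdsWithin_le_nhds (Iio_mem_nhds hr)] with y hy hy'
    exact h3 y ⟨hy.1, hy'⟩
  · intro x hx
    obtain ⟨r, hr, f, h1, h2, h3⟩ := key x ⟨hx.1.le, hx.2⟩
    have h4 : ContDiffOn ℝ (⊤ : ℕ∞) (f 0) (Ioo (-r) r) :=
      seq_contDiffOn isOpen_Ioo fun k y hy => h1 k y (abs_lt.2 hy)
    have h5 : ContDiffAt ℝ (⊤ : ℕ∞) (f 0) x :=
      h4.contDiffAt (Ioo_mem_nhds (by linarith [hx.1]) hr)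
    refine (h5.congr_of_eventuallyEq ?_).contDiffWithinAt
    filter_upwards [Ioo_mem_nhds hx.1 hr] with y hy using h3 y ⟨hy.1.le, hy.2⟩
  · intro k x hx
    obtain ⟨r, hr, f, h1, h2, h3⟩ := key x ⟨hx.1.le, hx.2⟩
    rw [iteratedDerivWithin_of_isOpen isOpen_Ioo hx]
    have : F =ᶠ[nhds x] f 0 := by
      filter_upwards [Ioo_mem_nhds hx.1 hr] with y hy using h3 y ⟨hy.1.le, hy.2⟩
    rw [this.iteratedDeriv_eq k, seq_iteratedDeriv (S := Ioo (-r) r) isOpen_Ioo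
      (fun k y hy => h1 k y (abs_lt.2 hy)) k x ⟨by linarith [hx.1], hr⟩]
    exact h2 k x ⟨hx.1.le, hr⟩

open MeasureTheory in
lemma exists_mollify {Ft : ℝ → ℝ} (hm : Monotone Ft) {δ : ℝ} (hδ : 0 < δ) :
    ∃ G : ℝ → ℝ, ContDiff ℝ (⊤ : ℕ∞) G ∧ ∀ (n : ℕ) (w x : Fin n → ℝ) (C : ℝ),
      (∀ s ∈ Icc δ (3 * δ), C ≤ ∑ i, w i * Ft (x i + s)) → C ≤ ∑ i, w i * G (x i) := by
  let φ : ContDiffBump (0:ℝ) := ⟨δ/2, δ, by linarith, by linarith⟩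
  let ψ : ℝ → ℝ := φ.normed volume
  have hψc : Continuous ψ := φ.continuous_normed
  have hψs : HasCompactSupport ψ := φ.hasCompactSupport_normed
  have hli : LocallyIntegrable Ft volume := hm.locallyIntegrable
  have hint : ∀ y : ℝ, Integrable (fun t => ψ t * Ft (y - t)) volume := by
    intro y
    have := (hψs.convolutionExists_left (ContinuousLinearMap.lsmul ℝ ℝ) hψc hli) y
    simpa [ConvolutionExistsAt] using this
  refine ⟨fun x => ∫ t, ψ t * Ft (x + 2 * δ - t), ?_, ?_⟩
  · have h1 : ContDiff ℝ (⊤ : ℕ∞) (convolution ψ Ft (ContinuousLinearMap.lsmul ℝ ℝ) volume) :=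
      hψs.contDiff_convolution_left _ φ.contDiff_normed hli
    have h2 : ContDiff ℝ (⊤ : ℕ∞) (fun x : ℝ => x + 2 * δ) := by fun_prop
    have h3 := h1.comp h2
    convert h3 using 1
    ext x; simp [convolution]
  · intro n w x C h
    have h1 : ∑ i, w i * ∫ t, ψ t * Ft (x i + 2 * δ - t) =
        ∫ t, ∑ i, w i * (ψ t * Ft (x i + 2 * δ - t)) := by
      rw [integral_finsetSum]
      · simp_rw [integral_const_mul]
      · intro i _
        exact (hint _).const_mul _
    rw [h1]
    have h2 : C = ∫ t, ψ t * C := by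
      rw [integral_mul_const, φ.integral_normed, one_mul]
    rw [h2]
    refine integral_mono ?_ ?_ ?_
    · exact (φ.integrable_normed).mul_const C
    · exact integrable_finsetSum _ fun i _ => (hint _).const_mul _
    · intro t
      have h3 : 0 ≤ ψ t := φ.nonneg_normed t
      have h4 : ∑ i, w i * (ψ t * Ft (x i + 2 * δ - t)) =
          ψ t * ∑ i, w i * Ft (x i + (2 * δ - t)) := by
        rw [Finset.mul_sum]
        refine Finset.sum_congr rfl fun i _ => ?_
        rw [add_sub_assoc]; ring
      simp only [h4]
      by_cases ht : ψ t = 0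
      · simp [ht]
      · have : t ∈ Function.support ψ := ht
        rw [show Function.support ψ = Metric.ball 0 δ from φ.support_normed_eq] at this
        rw [Metric.mem_ball, Real.dist_eq, sub_zero, abs_lt] at this
        exact mul_le_mul_of_nonneg_left (h _ ⟨by linarith [this.2], by linarith [this.1]⟩) h3

lemma horn {f : ℝ → ℝ} (hf : ContDiff ℝ (⊤ : ℕ∞) f) {a : ℝ} (N : ℕ)
    (h : ∀ᶠ ε in nhdsWithin (0:ℝ) (Ioi 0), ∀ (n : ℕ) (v : Fin n → ℝ),
      0 ≤ ∑ i, ∑ j, v i * v j * f (a + ε * (1/2) ^ ((i:ℕ) + (j:ℕ)))) :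
    0 ≤ iteratedDeriv N f a := by
  let u : ℝ := 1/2
  have hu0 : 0 < u := by norm_num [u]
  let p : Polynomial ℝ := ∏ m ∈ Finset.range N, (Polynomial.X - Polynomial.C (u ^ m))
  have hdeg : p.natDegree < N + 1 := by
    have : p.natDegree = N := by
      simp only [p]; rw [Polynomial.natDegree_finsetProd_X_sub_C_eq_card]; simp
    omega
  have hp0 : ∀ m < N, p.eval (u^m) = 0 := by
    intro m hm
    simp only [p, Polynomial.eval_prod]
    exact Finset.prod_eq_zero (Finset.mem_range.2 hm) (by simp)
  have hpN : p.eval (u^N) ≠ 0 := by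
    simp only [p, Polynomial.eval_prod]
    refine Finset.prod_ne_zero_iff.2 fun m hm => ?_
    have hm := Finset.mem_range.1 hm
    simp only [Polynomial.eval_sub, Polynomial.eval_X, Polynomial.eval_C]
    have : u ^ N < u ^ m := pow_lt_pow_right_of_lt_one₀ hu0 (by norm_num [u]) hm
    linarith
  let v : Fin (N+1) → ℝ := fun i => p.coeff i
  have hv : ∀ m : ℕ, ∑ i : Fin (N+1), v i * u ^ (m * (i:ℕ)) = p.eval (u ^ m) := by
    intro m
    rw [Polynomial.eval_eq_sum_range' hdeg, ← Fin.sum_univ_eq_sum_range (fun i => p.coeff i * (u^m)^i)]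
    refine Finset.sum_congr rfl fun i _ => ?_
    rw [pow_mul]
  let d : ℕ → ℝ := fun m => iteratedDeriv m f a / (m.factorial : ℝ)
  let T : ℝ → ℝ := fun h => ∑ m ∈ Finset.range (N+1), d m * h ^ m
  have hT : ∀ h, taylorWithinEval f N univ a (a + h) = T h := by
    intro h
    rw [taylor_within_apply]
    refine Finset.sum_congr rfl fun m _ => ?_
    rw [iteratedDerivWithin_univ]; simp [d]; ring
  have hlim : Tendsto (fun h => (f (a+h) - T h) / h ^ N) (nhds 0) (nhds 0) := by
    have h1 := Real.taylor_tendsto (f := f) (x₀ := a) (n := N) convex_univ (mem_univ a)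
      ((hf.of_le (by exact_mod_cast le_top)).contDiffOn)
    rw [nhdsWithin_univ] at h1
    have h2 : Tendsto (fun h : ℝ => a + h) (nhds 0) (nhds a) := by
      have := (Continuous.tendsto (f := fun h : ℝ => a + h) (by fun_prop) 0)
      simpa using this
    refine (h1.comp h2).congr fun h => ?_
    simp [hT]
  -- the quadratic form of the Taylor polynomial
  have hQT : ∀ ε : ℝ, ∑ i, ∑ j, v i * v j * T (ε * u ^ ((i:ℕ) + (j:ℕ))) =
      d N * ε ^ N * (p.eval (u^N))^2 := by
    intro ε
    have e1 : ∑ i, ∑ j, v i * v j * T (ε * u ^ ((i:ℕ) + (j:ℕ))) =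
        ∑ m ∈ Finset.range (N+1), d m * ε ^ m * (p.eval (u^m))^2 := by
      have e2 : ∀ m, d m * ε ^ m * (p.eval (u^m))^2 =
          ∑ i : Fin (N+1), ∑ j : Fin (N+1), v i * v j * (d m * (ε * u ^ ((i:ℕ) + (j:ℕ))) ^ m) := by
        intro m
        rw [sq, ← hv, Finset.sum_mul_sum, Finset.mul_sum]
        refine Finset.sum_congr rfl fun i _ => ?_
        rw [Finset.mul_sum]
        refine Finset.sum_congr rfl fun j _ => ?_
        rw [mul_pow, ← pow_mul, add_mul, pow_add, mul_comm m, mul_comm m]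
        ring
      simp_rw [e2, T, Finset.mul_sum]
      rw [Finset.sum_comm]
      conv_rhs => rw [Finset.sum_comm]
      rw [Finset.sum_comm]
      refine Finset.sum_congr rfl fun i _ => ?_
      rw [Finset.sum_comm]
    rw [e1, Finset.sum_range_succ, Finset.sum_eq_zero, zero_add]
    intro m hm
    rw [hp0 m (Finset.mem_range.1 hm)]; simp
  have hlim2 : Tendsto (fun ε => d N * (p.eval (u^N))^2 + ∑ i, ∑ j, v i * v j *
      (u ^ ((i:ℕ) + (j:ℕ))) ^ N * ((f (a+ ε * u ^ ((i:ℕ) + (j:ℕ))) - T (ε * u ^ ((i:ℕ) + (j:ℕ))))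
        / (ε * u ^ ((i:ℕ) + (j:ℕ))) ^ N))
      (nhdsWithin 0 (Ioi 0)) (nhds (d N * (p.eval (u^N))^2)) := by
    have : Tendsto (fun ε => ∑ i, ∑ j, v i * v j *
      (u ^ ((i:ℕ) + (j:ℕ))) ^ N * ((f (a+ ε * u ^ ((i:ℕ) + (j:ℕ))) - T (ε * u ^ ((i:ℕ) + (j:ℕ))))
        / (ε * u ^ ((i:ℕ) + (j:ℕ))) ^ N))
      (nhdsWithin 0 (Ioi 0)) (nhds (∑ i, ∑ j, v i * v j *
      (u ^ ((i:ℕ) + (j:ℕ))) ^ N * 0)) := by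
      refine tendsto_finsetSum _ fun i _ => tendsto_finsetSum _ fun j _ => ?_
      refine Tendsto.const_mul _ ?_
      refine hlim.comp ?_
      have h2 := (Continuous.tendsto (f := fun ε : ℝ => ε * u ^ ((i:ℕ) + (j:ℕ))) (by fun_prop) 0)
      rw [zero_mul] at h2
      exact h2.mono_left nhdsWithin_le_nhds
    simpa using this.const_add (d N * (p.eval (u^N))^2)
  have hge : 0 ≤ d N * (p.eval (u^N))^2 := by
    refine ge_of_tendsto hlim2 ?_
    filter_upwards [h, self_mem_nhdsWithin] with ε h1 h2
    have hε : 0 < ε := h2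
    have h3 := h1 (N+1) v
    have e : d N * (p.eval (u^N))^2 + ∑ i, ∑ j, v i * v j *
      (u ^ ((i:ℕ) + (j:ℕ))) ^ N * ((f (a+ ε * u ^ ((i:ℕ) + (j:ℕ))) - T (ε * u ^ ((i:ℕ) + (j:ℕ))))
        / (ε * u ^ ((i:ℕ) + (j:ℕ))) ^ N) =
        (∑ i, ∑ j, v i * v j * f (a + ε * u ^ ((i:ℕ) + (j:ℕ)))) / ε ^ N := by
      rw [eq_div_iff (by positivity), add_mul]
      have := hQT ε
      have e3 : d N * (p.eval (u^N))^2 * ε ^ N =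
          ∑ i, ∑ j, v i * v j * T (ε * u ^ ((i:ℕ) + (j:ℕ))) := by rw [this]; ring
      rw [e3, Finset.sum_mul, ← Finset.sum_add_distrib]
      refine Finset.sum_congr rfl fun i _ => ?_
      rw [Finset.sum_mul, ← Finset.sum_add_distrib]
      refine Finset.sum_congr rfl fun j _ => ?_
      have : (u ^ ((i:ℕ) + (j:ℕ))) ≠ 0 := by positivity
      rw [mul_pow]
      field_simp
      ring
    rw [e]
    exact div_nonneg h3 (by positivity)
  have h5 : 0 < (p.eval (u^N))^2 := by positivity
  have h6 : 0 ≤ d N := nonneg_of_mul_nonneg_left hge h5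
  have h7 : iteratedDeriv N f a = d N * (N.factorial : ℝ) := by
    simp only [d]; field_simp
  rw [h7]; positivity

lemma hankel_two {F : ℝ → ℝ} {S : Set ℝ}
    (h : ∀ (n : ℕ) (A : Matrix (Fin n) (Fin n) ℝ), IsHankelMat A →
      (∀ i j, A i j ∈ S) → A.PosSemidef → (A.map F).PosSemidef) {x y : ℝ} (hx : 0 ≤ x) (hxy : x ≤ y)
    (hxS : x ∈ S) (hyS : y ∈ S) : F x ≤ F y := by
  have h1 := h 2 !![y, x; x, y] ?_ ?_ ?_
  · have := ((psd_iff_form _).1 h1).2 ![1, -1]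
    simp [Fin.sum_univ_two] at this
    linarith
  · intro i j k l hij
    fin_cases i <;> fin_cases j <;> fin_cases k <;> fin_cases l <;> simp_all
  · intro i j
    fin_cases i <;> fin_cases j <;> simp [hxS, hyS]
  · rw [psd_iff_form]
    constructor
    · intro i j
      fin_cases i <;> fin_cases j <;> simp
    · intro v
      simp [Fin.sum_univ_two]
      nlinarith [mul_nonneg hx (sq_nonneg (v 0 + v 1)), mul_nonneg (sub_nonneg.2 hxy) (sq_nonneg (v 0)), mul_nonneg (sub_nonneg.2 hxy) (sq_nonneg (v 1))]

lemma hankel_three {F : ℝ → ℝ} {ρ : ℝ}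
    (h : ∀ (n : ℕ) (A : Matrix (Fin n) (Fin n) ℝ), IsHankelMat A →
      (∀ i j, A i j ∈ Ico 0 ρ) → A.PosSemidef → (A.map F).PosSemidef) {x : ℝ} (hx : 0 < x)
    (hxρ : 2 * x < ρ) : 0 ≤ 5 * F (2 * x) - 7 * F x + 2 * F 0 := by
  have h1 := h 3 !![2*x, 0, x; 0, x, x; x, x, 2*x] ?_ ?_ ?_
  · have := ((psd_iff_form _).1 h1).2 ![1, 1, -2]
    simp [Fin.sum_univ_three] at this
    linarith
  · have e : !![2*x, 0, x; 0, x, x; x, x, 2*x] = Matrix.of fun i j : Fin 3 =>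
        (fun k : ℕ => if k = 1 then 0 else if k = 0 ∨ k = 4 then 2 * x else x) ((i:ℕ) + (j:ℕ)) := by
      ext i j
      fin_cases i <;> fin_cases j <;> simp
    intro i j k l hij
    rw [e, Matrix.of_apply, Matrix.of_apply, hij]
  · intro i j
    fin_cases i <;> fin_cases j <;> simp <;> (try constructor) <;> linarith
  · rw [psd_iff_form]
    constructor
    · intro i j
      fin_cases i <;> fin_cases j <;> simp
    · intro v
      simp [Fin.sum_univ_three]
      nlinarith [mul_nonneg hx.le (sq_nonneg (v 0 + v 2)), mul_nonneg hx.le (sq_nonneg (v 1 + v 2)), mul_nonneg hx.le (sq_nonneg (v 0))]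

lemma hankel_form {F : ℝ → ℝ} {ρ : ℝ}
    (h : ∀ (n : ℕ) (A : Matrix (Fin n) (Fin n) ℝ), IsHankelMat A →
      (∀ i j, A i j ∈ Ico 0 ρ) → A.PosSemidef → (A.map F).PosSemidef) {b ε : ℝ} (hb : 0 ≤ b)
    (hε : 0 ≤ ε) (hbε : b + ε < ρ) (n : ℕ) (v : Fin n → ℝ) :
    0 ≤ ∑ i, ∑ j, v i * v j * F (b + ε * (1/2) ^ ((i:ℕ) + (j:ℕ))) := by
  have h1 := h n (Matrix.of fun i j => b + ε * (1/2) ^ ((i:ℕ) + (j:ℕ))) ?_ ?_ ?_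
  · exact ((psd_iff_form _).1 h1).2 v
  · intro i j k l hij
    simp [hij]
  · intro i j
    simp only [Matrix.of_apply]
    refine ⟨by positivity, lt_of_le_of_lt ?_ hbε⟩
    have : ((1:ℝ)/2) ^ ((i:ℕ) + (j:ℕ)) ≤ 1 := pow_le_one₀ (by norm_num) (by norm_num)
    nlinarith
  · rw [psd_iff_form]
    refine ⟨fun i j => by simp [add_comm], fun x => ?_⟩
    have : ∑ i, ∑ j, x i * x j * (Matrix.of fun i j : Fin n => b + ε * (1/2) ^ ((i:ℕ) + (j:ℕ))) i j
      = b * ((∑ i, x i) * (∑ i, x i)) + ε * ((∑ i, x i * (1/2)^(i:ℕ)) * (∑ i, x i * (1/2)^(i:ℕ))) := by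
      rw [Finset.sum_mul_sum, Finset.sum_mul_sum, Finset.mul_sum, Finset.mul_sum, ← Finset.sum_add_distrib]
      refine Finset.sum_congr rfl fun i _ => ?_
      rw [Finset.mul_sum, Finset.mul_sum, ← Finset.sum_add_distrib]
      refine Finset.sum_congr rfl fun j _ => ?_
      simp only [Matrix.of_apply, pow_add]; ring
    rw [this]
    exact add_nonneg (mul_nonneg hb (mul_self_nonneg _)) (mul_nonneg hε (mul_self_nonneg _))

lemma hankel_local {F : ℝ → ℝ} {ρ : ℝ}
    (h : ∀ (n : ℕ) (A : Matrix (Fin n) (Fin n) ℝ), IsHankelMat A →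
      (∀ i j, A i j ∈ Ico 0 ρ) → A.PosSemidef → (A.map F).PosSemidef) :
    ∀ r ∈ Ioo 0 ρ, ∃ c : ℕ → ℝ, (∀ k, 0 ≤ c k) ∧
      ∀ x ∈ Ico 0 r, HasSum (fun k => c k * x ^ k) (F x) := by
  intro r hr
  have hmono : ∀ x y, 0 ≤ x → x ≤ y → y < ρ → F x ≤ F y := fun x y h0 h1 h2 =>
    hankel_two h h0 h1 ⟨h0, h1.trans_lt h2⟩ ⟨h0.trans h1, h2⟩
  obtain ⟨R, hrR, hRρ⟩ := exists_between hr.2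
  obtain ⟨r', hrr', hr'R⟩ := exists_between hrR
  have hr0 : 0 < r := hr.1
  have hR0 : 0 < R := hr0.trans hrR
  have hr'0 : 0 < r' := hr0.trans hrr'
  let Ft : ℝ → ℝ := fun x => F (max 0 (min x R))
  have hFt : Monotone Ft := by
    intro x y hxy
    refine hmono _ _ (le_max_left _ _) (max_le_max le_rfl (min_le_min hxy le_rfl)) ?_
    exact max_lt (hR0.trans hRρ) ((min_le_right _ _).trans_lt hRρ)
  have hFte : ∀ x, 0 ≤ x → x ≤ R → Ft x = F x := by
    intro x h0 h1
    simp [Ft, min_eq_left h1, max_eq_right h0]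
  have hFtR : ∀ x, Ft x ≤ F R := by
    intro x
    refine hmono _ _ (le_max_left _ _) (max_le hR0.le (min_le_right _ _)) hRρ
  let δ : ℕ → ℝ := fun n => (R - r') / 4 * (1 / ((n:ℝ) + 1))
  have hδ0 : ∀ n, 0 < δ n := fun n => by
    have : 0 < R - r' := by linarith
    simp only [δ]; positivity
  have hδ1 : ∀ n, 3 * δ n < R - r' := fun n => by
    have h1 : 0 < R - r' := by linarith
    have h2 : 1 / ((n:ℝ) + 1) ≤ 1 := by
      rw [div_le_one (by positivity)]; linarith [(Nat.cast_nonneg n : (0:ℝ) ≤ n)]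
    simp only [δ]; nlinarith
  have hδl : Tendsto δ atTop (nhds 0) := by
    have := (tendsto_one_div_add_atTop_nhds_zero_nat (𝕜 := ℝ)).const_mul ((R - r') / 4)
    rw [mul_zero] at this
    exact this
  choose G hGs hG using fun n => exists_mollify hFt (hδ0 n)
  have hGlow : ∀ n x, Ft (x + δ n) ≤ G n x := by
    intro n x
    have := hG n 1 (fun _ => 1) (fun _ => x) (Ft (x + δ n)) (fun s hs => by
      simpa using hFt (by linarith [hs.1]))
    simpa using this
  have hGup : ∀ n x, G n x ≤ Ft (x + 3 * δ n) := by
    intro n x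
    have := hG n 1 (fun _ => -1) (fun _ => x) (-Ft (x + 3 * δ n)) (fun s hs => by
      simpa using hFt (by linarith [hs.2]))
    simpa using this
  have hGd : ∀ n k, ∀ t ∈ Ico 0 (R - 3 * δ n), 0 ≤ iteratedDeriv k (G n) t := by
    intro n k t ht
    refine horn (hGs n) k ?_
    have hev : ∀ᶠ ε in nhdsWithin (0:ℝ) (Ioi 0), ε < R - 3 * δ n - t :=
      nhdsWithin_le_nhds (Iio_mem_nhds (by linarith [ht.2]))
    filter_upwards [hev, self_mem_nhdsWithin] with ε h1 h2 m v
    have hε : 0 < ε := h2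
    have key := hG n (m * m) (fun q => v (finProdFinEquiv.symm q).1 * v (finProdFinEquiv.symm q).2)
      (fun q => t + ε * (1/2) ^ (((finProdFinEquiv.symm q).1:ℕ) + ((finProdFinEquiv.symm q).2:ℕ))) 0 ?_
    · rw [← finProdFinEquiv.sum_comp] at key
      simp only [Equiv.symm_apply_apply] at key
      rwa [Fintype.sum_prod_type] at key
    · intro s hs
      rw [← finProdFinEquiv.sum_comp]
      simp only [Equiv.symm_apply_apply]
      rw [Fintype.sum_prod_type]
      have h3 := hankel_form h (b := t + s) (ε := ε) (by linarith [ht.1, hs.1, hδ0 n]) hε.le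
        (by linarith [hs.2]) m v
      refine h3.trans (le_of_eq ?_)
      refine Finset.sum_congr rfl fun i _ => Finset.sum_congr rfl fun j _ => ?_
      have h4 : ((1:ℝ)/2) ^ ((i:ℕ) + (j:ℕ)) ≤ 1 := pow_le_one₀ (by norm_num) (by norm_num)
      have h5 : (0:ℝ) ≤ ((1:ℝ)/2) ^ ((i:ℕ) + (j:ℕ)) := by positivity
      have h6 : ε * ((1:ℝ)/2) ^ ((i:ℕ) + (j:ℕ)) ≤ ε := by nlinarith
      have h7 : 0 ≤ ε * ((1:ℝ)/2) ^ ((i:ℕ) + (j:ℕ)) := by positivity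
      rw [hFte _ (by linarith [ht.1, hs.1, hδ0 n]) (by linarith [hs.2])]
      congr 2; ring
  let cn : ℕ → ℕ → ℝ := fun n k => iteratedDeriv k (G n) 0 / (k.factorial : ℝ)
  have hcn : ∀ n, ∀ x ∈ Ico 0 (R - 3 * δ n), HasSum (fun k => cn n k * x ^ k) (G n x) := by
    intro n x hx
    have := bernstein_hasSum (f := fun k => iteratedDeriv k (G n)) (a := 0) (T := R - 3 * δ n)
      ?_ ?_ hx
    · simpa using this
    · intro k t _
      rw [iteratedDeriv_succ]
      exact ((hGs n).differentiable_iteratedDeriv k (by exact_mod_cast WithTop.coe_lt_top _) _).hasDerivAt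
    · intro k t ht
      simpa using hGd n k t ht
  have hcn0 : ∀ n k, 0 ≤ cn n k := fun n k =>
    div_nonneg (hGd n k 0 ⟨le_rfl, by linarith [hδ1 n]⟩) (by positivity)
  have hcnB : ∀ n k, cn n k ≤ F R / r' ^ k := by
    intro n k
    rw [le_div_iff₀ (by positivity)]
    have h1 := hcn n r' ⟨hr'0.le, by linarith [hδ1 n]⟩
    have h2 := le_hasSum h1 k (fun j _ => mul_nonneg (hcn0 n j) (by positivity))
    exact h2.trans ((hGup n r').trans (hFtR _))
  have hlim : ∀ k, ∃ c, c ∈ Icc 0 (F R / r' ^ k) ∧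
      Tendsto (fun n => cn n k) (hyperfilter ℕ : Filter ℕ) (nhds c) := by
    intro k
    have := (isCompact_Icc (a := (0:ℝ)) (b := F R / r' ^ k)).ultrafilter_le_nhds
      ((hyperfilter ℕ).map fun n => cn n k) ?_
    · obtain ⟨c, hc, hc'⟩ := this
      exact ⟨c, hc, hc'⟩
    · rw [le_principal_iff]
      exact Eventually.of_forall (f := (hyperfilter ℕ : Filter ℕ)) fun n => ⟨hcn0 n k, hcnB n k⟩
  choose c hc hcl using hlim
  have hUle : (hyperfilter ℕ : Filter ℕ) ≤ atTop := Nat.hyperfilter_le_atTop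
  have hFR : 0 ≤ F R := by
    have := (hc 0).1.trans (hc 0).2; simpa using this
  have hbs : ∀ x ∈ Ico 0 r, Summable fun k => F R * (x / r') ^ k := by
    intro x hx
    refine (summable_geometric_of_lt_one (div_nonneg hx.1 hr'0.le) ?_).mul_left _
    rw [div_lt_one hr'0]; linarith [hx.2]
  have hbd : ∀ x ∈ Ico 0 r, ∀ k, ∀ a ∈ Icc 0 (F R / r' ^ k), ‖a * x ^ k‖ ≤ F R * (x / r') ^ k := by
    intro x hx k a ha
    rw [Real.norm_of_nonneg (mul_nonneg ha.1 (pow_nonneg hx.1 _)), div_pow]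
    calc a * x ^ k ≤ F R / r' ^ k * x ^ k := mul_le_mul_of_nonneg_right ha.2 (pow_nonneg hx.1 _)
      _ = _ := by ring
  have hsum : ∀ x ∈ Ico 0 r, Summable fun k => c k * x ^ k := fun x hx =>
    Summable.of_norm_bounded (hbs x hx) fun k => hbd x hx k _ (hc k)
  let g : ℝ → ℝ := fun x => ∑' k, c k * x ^ k
  have hgl : ∀ x ∈ Ico 0 r, Tendsto (fun n => G n x) (hyperfilter ℕ : Filter ℕ) (nhds (g x)) := by
    intro x hx
    have h1 := tendsto_tsum_of_dominated_convergence (𝓕 := (hyperfilter ℕ : Filter ℕ))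
      (f := fun n k => cn n k * x ^ k) (g := fun k => c k * x ^ k) (hbs x hx)
      (fun k => (hcl k).mul_const _)
      (Eventually.of_forall fun n k => hbd x hx k _ ⟨hcn0 n k, hcnB n k⟩)
    refine h1.congr fun n => ?_
    exact (hcn n x ⟨hx.1, by linarith [hx.2, hδ1 n]⟩).tsum_eq
  have hgc : ∀ x ∈ Ico 0 r, ContinuousAt g x := fun x hx =>
    (ps_hasDerivAt (fun k => (hc k).1) hsum (by rw [abs_of_nonneg hx.1]; exact hx.2)).continuousAt
  have hFg : ∀ x ∈ Ico 0 r, F x ≤ g x := by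
    intro x hx
    refine ge_of_tendsto' (hgl x hx) fun n => ?_
    rw [← hFte x hx.1 (by linarith [hx.2])]
    exact (hFt (by linarith [hδ0 n])).trans (hGlow n x)
  have hgF' : ∀ x ∈ Ico 0 r, ∀ y, 0 ≤ y → y < x → g y ≤ F x := by
    intro x hx y hy hyx
    refine le_of_tendsto (hgl y ⟨hy, hyx.trans hx.2⟩) ?_
    have h1 : ∀ᶠ n in atTop, δ n < (x - y) / 3 := hδl.eventually_lt_const (by linarith)
    filter_upwards [h1.filter_mono hUle] with n hn
    rw [← hFte x hx.1 (by linarith [hx.2])]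
    exact (hGup n y).trans (hFt (by linarith))
  have hgF : ∀ x ∈ Ioo 0 r, g x ≤ F x := by
    intro x hx
    have h1 : Tendsto g (nhdsWithin x (Iio x)) (nhds (g x)) :=
      (hgc x ⟨hx.1.le, hx.2⟩).mono_left nhdsWithin_le_nhds
    refine le_of_tendsto h1 ?_
    filter_upwards [self_mem_nhdsWithin, nhdsWithin_le_nhds (Ioi_mem_nhds hx.1)] with y hy hy'
    exact hgF' x ⟨hx.1.le, hx.2⟩ y (le_of_lt hy') hy
  have hEq : ∀ x ∈ Ioo 0 r, F x = g x := fun x hx =>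
    le_antisymm (hFg x ⟨hx.1.le, hx.2⟩) (hgF x hx)
  have hEq0 : F 0 = g 0 := by
    refine le_antisymm (hFg 0 ⟨le_rfl, hr0⟩) ?_
    have hg0 := hgc 0 ⟨le_rfl, hr0⟩
    have h1 : Tendsto (fun x : ℝ => 2 * x) (nhds 0) (nhds 0) := by
      simpa using (Continuous.tendsto (f := fun x : ℝ => 2 * x) (by fun_prop) 0)
    have h2 : Tendsto (fun x => 5 * g (2 * x) - 7 * g x + 2 * F 0) (nhdsWithin 0 (Ioi 0))
        (nhds (5 * g 0 - 7 * g 0 + 2 * F 0)) := by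
      have h3 : Tendsto (fun x => g (2 * x)) (nhds 0) (nhds (g 0)) := hg0.tendsto.comp h1
      exact (((h3.const_mul 5).sub (hg0.tendsto.const_mul 7)).add_const _).mono_left
        nhdsWithin_le_nhds
    have h3 : 0 ≤ 5 * g 0 - 7 * g 0 + 2 * F 0 := by
      refine ge_of_tendsto h2 ?_
      filter_upwards [self_mem_nhdsWithin,
        nhdsWithin_le_nhds (Iio_mem_nhds (show (0:ℝ) < r / 2 by linarith))] with x hx hx'
      have hx : 0 < x := hx
      have hx' : x < r / 2 := hx'
      rw [← hEq x ⟨hx, by linarith⟩, ← hEq (2 * x) ⟨by linarith, by linarith⟩]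
      exact hankel_three h hx (by linarith [hr.2])
    linarith
  refine ⟨c, fun k => (hc k).1, fun x hx => ?_⟩
  have : F x = g x := by
    rcases hx.1.eq_or_lt with h0 | h0
    · rw [← h0]; exact hEq0
    · exact hEq x ⟨h0, hx.2⟩
  rw [this]
  exact (hsum x hx).hasSum

/-- Entrywise positivity preservers on matrices with entries in `[0, ρ]` (respectively
`[0, ρ)`): preservation on Hankel matrices, absolute monotonicity, and preservation on
all matrices are equivalent. -/
theorem preserver_closed_zero_rho_TFAE (ρ : ℝ) (hρ : 0 < ρ) (F : ℝ → ℝ) :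
    (List.TFAE
      [∀ (n : ℕ) (A : Matrix (Fin n) (Fin n) ℝ), IsHankelMat A →
          (∀ i j, A i j ∈ Set.Icc 0 ρ) → A.PosSemidef → (A.map F).PosSemidef,
        AbsMonOnIco F ρ ∧
          ∃ L : ℝ, Tendsto F (nhdsWithin ρ (Set.Iio ρ)) (nhds L) ∧ L ≤ F ρ,
        ∀ (n : ℕ) (A : Matrix (Fin n) (Fin n) ℝ),
          (∀ i j, A i j ∈ Set.Icc 0 ρ) → A.PosSemidef → (A.map F).PosSemidef]) ∧
    (List.TFAE
      [∀ (n : ℕ) (A : Matrix (Fin n) (Fin n) ℝ), IsHankelMat A →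
          (∀ i j, A i j ∈ Set.Ico 0 ρ) → A.PosSemidef → (A.map F).PosSemidef,
        AbsMonOnIco F ρ,
        ∀ (n : ℕ) (A : Matrix (Fin n) (Fin n) ℝ),
          (∀ i j, A i j ∈ Set.Ico 0 ρ) → A.PosSemidef → (A.map F).PosSemidef]) := by
  constructor
  · tfae_have 1 → 2 := by
      intro h
      refine ⟨absMon_of_local (hankel_local fun n A hA hA' hP =>
        h n A hA (fun i j => Ico_subset_Icc_self (hA' i j)) hP), ?_⟩
      have hm : ∀ x ∈ Ioo 0 ρ, F x ≤ F ρ := fun x hx =>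
        hankel_two h hx.1.le hx.2.le ⟨hx.1.le, hx.2.le⟩ ⟨hρ.le, le_rfl⟩
      have hmono : MonotoneOn F (Ioo 0 ρ) := fun x hx y hy hxy =>
        hankel_two h hx.1.le hxy ⟨hx.1.le, hx.2.le⟩ ⟨hy.1.le, hy.2.le⟩
      have hb : BddAbove (F '' Ioo 0 ρ) := ⟨F ρ, by rintro _ ⟨x, hx, rfl⟩; exact hm x hx⟩
      have hne : (Ioo 0 ρ).Nonempty := nonempty_Ioo.2 hρ
      refine ⟨sSup (F '' Ioo 0 ρ), hmono.tendsto_nhdsWithin_Ioo_left hne hb, ?_⟩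
      exact csSup_le (hne.image F) (by rintro _ ⟨x, hx, rfl⟩; exact hm x hx)
    tfae_have 2 → 3 := by
      rintro ⟨h1, L, h2, h3⟩ n A hA hP
      exact closed_two_three hρ h1 h2 h3 n A hA hP
    tfae_have 3 → 1 := fun h n A _ => h n A
    tfae_finish
  · tfae_have 1 → 2 := fun h => absMon_of_local (hankel_local h)
    tfae_have 2 → 3 := fun h n A hA hP => open_two_three h n A hA hP
    tfae_have 3 → 1 := fun h n A _ => h n A
    tfae_finish
end

section
/- Let ρ ∈ (0,∞) and suppose F : [−ρ,ρ] → ℝ is real analytic on (−ρ,ρ), absolutely monotonic on (0,ρ) (all derivatives non-negative there), and both one-sided limits lim_{x→ρ⁻} F(x) and lim_{x→−ρ⁺} F(x) exist and are finite. If |F(−ρ) − lim_{x→−ρ⁺} F(x)| ≤ F(ρ) − lim_{x→ρ⁻} F(x), then applying F entrywise maps every positive semidefinite matrix of any finite size with entries in [−ρ,ρ] to a positive semidefinite matrix. Conversely, if the restriction of F to (−ρ,ρ) is an odd or an even function and F applied entrywise preserves positive semidefiniteness on all matrices with entries in [−ρ,ρ], then the above inequality holds. -/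
open Filter Set

theorem aux_pow {n : ℕ} (A : Matrix (Fin n) (Fin n) ℝ) (hA : A.PosSemidef) (k : ℕ) :
    (A.map (fun x => x ^ k)).PosSemidef := by
  induction k with
  | zero =>
    refine Matrix.PosSemidef.of_dotProduct_mulVec_nonneg ?_ ?_
    · ext i j; simp
    · intro x
      have : star x ⬝ᵥ (A.map (fun x => x ^ 0)).mulVec x = (∑ i, x i) ^ 2 := by
        simp [dotProduct, Matrix.mulVec, ← Finset.sum_mul, sq]
      rw [this]; positivity
  | succ k ih =>
    have h := ih.hadamard hA
    have e : A.map (fun x => x ^ (k + 1)) = (A.map (fun x => x ^ k)).hadamard A := by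
      ext i j; simp [pow_succ]
    rw [e]; exact h

theorem aux_psum {n : ℕ} (A : Matrix (Fin n) (Fin n) ℝ) (hA : A.PosSemidef) (a : ℕ → ℝ)
    (ha : ∀ k, 0 ≤ a k) (N : ℕ) :
    (A.map (fun x => ∑ k ∈ Finset.range N, a k * x ^ k)).PosSemidef := by
  induction N with
  | zero =>
    convert Matrix.PosSemidef.zero (n := Fin n) (R := ℝ) using 1
    ext i j; simp
  | succ N ih =>
    convert ih.add ((aux_pow A hA N).smul (ha N)) using 1
    ext i j; simp [Finset.sum_range_succ]

theorem aux_lim {n : ℕ} (A : Matrix (Fin n) (Fin n) ℝ) (f : ℕ → ℝ → ℝ) (F : ℝ → ℝ)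
    (hf : ∀ k, (A.map (f k)).PosSemidef)
    (hl : ∀ i j, Tendsto (fun k => f k (A i j)) atTop (nhds (F (A i j)))) :
    (A.map F).PosSemidef := by
  refine Matrix.PosSemidef.of_dotProduct_mulVec_nonneg ?_ ?_
  · ext i j
    simp only [Matrix.conjTranspose_apply, Matrix.map_apply, star_trivial]
    refine tendsto_nhds_unique (hl j i) ((hl i j).congr fun k => ?_)
    have := (hf k).1.apply i j
    simpa using this.symm
  · intro x
    have h : Tendsto (fun k => star x ⬝ᵥ (A.map (f k)).mulVec x) atTop
        (nhds (star x ⬝ᵥ (A.map F).mulVec x)) := by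
      simp only [dotProduct, Matrix.mulVec, Matrix.map_apply]
      refine tendsto_finsetSum _ fun i _ => Tendsto.const_mul _ ?_
      exact tendsto_finsetSum _ fun j _ => (hl i j).mul_const _
    exact ge_of_tendsto' h fun k => (hf k).dotProduct_mulVec_nonneg x

theorem aux_series (ρ : ℝ) (hρ : 0 < ρ) (F : ℝ → ℝ)
    (hAn : AnalyticOnNhd ℝ F (Set.Ioo (-ρ) ρ))
    (hAbs : ∀ k : ℕ, ∀ x ∈ Set.Ioo (0 : ℝ) ρ,
      0 ≤ iteratedDerivWithin k F (Set.Ioo 0 ρ) x)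
    (Lp : ℝ) (hLp : Tendsto F (nhdsWithin ρ (Set.Iio ρ)) (nhds Lp)) :
    ∃ a : ℕ → ℝ, (∀ k, 0 ≤ a k) ∧ (Summable fun k => a k * ρ ^ k) ∧
      ∀ x ∈ Ioo (-ρ) ρ, HasSum (fun k => a k * x ^ k) (F x) := by
  have hpos : ∀ k : ℕ, ∀ x ∈ Ioo (0 : ℝ) ρ, 0 ≤ iteratedDeriv k F x := by
    intro k x hx
    have := hAbs k x hx
    rwa [iteratedDerivWithin_of_isOpen isOpen_Ioo hx] at this
  have h0m : (0 : ℝ) ∈ Ioo (-ρ) ρ := ⟨by linarith, hρ⟩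
  have hpos0 : ∀ k : ℕ, 0 ≤ iteratedDeriv k F 0 := by
    intro k
    have hc : ContinuousAt (iteratedDeriv k F) 0 := by
      have h := (hAn.iterated_deriv k) 0 h0m
      rw [← iteratedDeriv_eq_iterate] at h
      exact h.continuousAt
    have hc' : Tendsto (iteratedDeriv k F) (nhdsWithin 0 (Ioi 0)) (nhds (iteratedDeriv k F 0)) :=
      hc.mono_left nhdsWithin_le_nhds
    refine ge_of_tendsto hc' ?_
    filter_upwards [Ioo_mem_nhdsGT hρ] with x hx using hpos k x hx
  set a : ℕ → ℝ := fun k => iteratedDeriv k F 0 / k.factorial with ha_def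
  have ha : ∀ k, 0 ≤ a k := fun k => div_nonneg (hpos0 k) (by positivity)
  have hpart : ∀ N : ℕ, ∀ x ∈ Ioo (0 : ℝ) ρ, ∑ k ∈ Finset.range (N + 1), a k * x ^ k ≤ F x := by
    intro N x hx
    have hsub : uIcc 0 x ⊆ Ioo (-ρ) ρ := by
      rw [uIcc_of_le hx.1.le]
      intro y hy
      exact ⟨by linarith [hy.1], by linarith [hy.2, hx.2]⟩
    obtain ⟨y, hy, h⟩ := taylor_mean_remainder_lagrange_iteratedDeriv (f := F) (n := N) hx.1.ne
      ((hAn.mono hsub).contDiffOn (uniqueDiffOn_uIcc hx.1.ne))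
    rw [uIoo_of_le hx.1.le] at hy
    have h2 : 0 ≤ F x - taylorWithinEval F N (uIcc 0 x) 0 x := by
      rw [h]
      have := hpos (N + 1) y ⟨hy.1, hy.2.trans hx.2⟩
      have hx0 := hx.1
      rw [sub_zero]
      positivity
    rw [taylor_within_apply] at h2
    have h3 : ∑ k ∈ Finset.range (N + 1), a k * x ^ k = ∑ k ∈ Finset.range (N + 1),
        ((k.factorial : ℝ)⁻¹ * (x - 0) ^ k) • iteratedDerivWithin k F (uIcc 0 x) 0 := by
      refine Finset.sum_congr rfl fun k _ => ?_
      rw [iteratedDerivWithin_eq_iteratedDeriv (uniqueDiffOn_uIcc hx.1.ne)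
        (hAn 0 h0m).contDiffAt left_mem_uIcc]
      simp [ha_def]; ring
    linarith
  have hpartρ : ∀ N : ℕ, ∑ k ∈ Finset.range (N + 1), a k * ρ ^ k ≤ Lp := by
    intro N
    have hc : Continuous (fun x : ℝ => ∑ k ∈ Finset.range (N + 1), a k * x ^ k) := by fun_prop
    refine le_of_tendsto_of_tendsto (hc.continuousAt.mono_left nhdsWithin_le_nhds) hLp ?_
    filter_upwards [Ioo_mem_nhdsLT hρ] with x hx using hpart N x hx
  have hterm : ∀ k, 0 ≤ a k * ρ ^ k := fun k => mul_nonneg (ha k) (by positivity)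
  have hsum : Summable fun k => a k * ρ ^ k := by
    refine summable_of_sum_range_le (c := Lp) hterm fun N => ?_
    refine le_trans ?_ (hpartρ N)
    rw [Finset.sum_range_succ]
    linarith [hterm N]
  refine ⟨a, ha, hsum, ?_⟩
  have hball : Metric.eball (0 : ℝ) (ENNReal.ofReal ρ) = Ioo (-ρ) ρ := by
    rw [Metric.eball_ofReal, Real.ball_eq_Ioo]; simp
  have hF := AnalyticOn.hasFPowerSeriesOnSubball (f := F) (x := (0 : ℝ)) (r := ENNReal.ofReal ρ)
    (by simpa using hρ) (by rw [hball]; exact hAn.analyticOn) (by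
      refine FormalMultilinearSeries.le_radius_of_summable _ ?_
      refine hsum.congr fun k => ?_
      rw [FormalMultilinearSeries.ofScalars_norm, Real.norm_of_nonneg (ha k),
        Real.coe_toNNReal _ hρ.le])
  intro x hx
  have h := hF.hasSum (y := x) (by rw [hball]; exact hx)
  simp only [FormalMultilinearSeries.ofScalars_apply_eq, smul_eq_mul, zero_add] at h
  exact h

theorem aux_end (ρ : ℝ) (hρ : 0 < ρ) (F : ℝ → ℝ) (a : ℕ → ℝ) (ha : ∀ k, 0 ≤ a k)
    (hs : Summable fun k => a k * ρ ^ k)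
    (hF : ∀ x ∈ Ioo (-ρ) ρ, HasSum (fun k => a k * x ^ k) (F x))
    (Lp Lm : ℝ)
    (hLp : Tendsto F (nhdsWithin ρ (Set.Iio ρ)) (nhds Lp))
    (hLm : Tendsto F (nhdsWithin (-ρ) (Set.Ioi (-ρ))) (nhds Lm)) :
    HasSum (fun k => a k * ρ ^ k) Lp ∧ HasSum (fun k => a k * (-ρ) ^ k) Lm := by
  have hb : ∀ k, ∀ x ∈ Icc (-ρ) ρ, ‖a k * x ^ k‖ ≤ a k * ρ ^ k := by
    intro k x hx
    rw [norm_mul, Real.norm_of_nonneg (ha k), norm_pow]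
    exact mul_le_mul_of_nonneg_left (pow_le_pow_left₀ (norm_nonneg _) (abs_le.2 hx) k) (ha k)
  have hc : ContinuousOn (fun x => ∑' k, a k * x ^ k) (Icc (-ρ) ρ) :=
    continuousOn_tsum (fun k => by fun_prop) hs hb
  have hlt : -ρ < ρ := by linarith
  constructor
  · rw [hs.hasSum_iff]
    have h1 : Tendsto (fun x => ∑' k, a k * x ^ k) (nhdsWithin ρ (Iio ρ))
        (nhds (∑' k, a k * ρ ^ k)) := by
      have := hc ρ ⟨hlt.le, le_rfl⟩
      rw [← nhdsWithin_Ioo_eq_nhdsLT hlt]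
      exact this.mono_left (nhdsWithin_mono _ Ioo_subset_Icc_self)
    refine tendsto_nhds_unique h1 (hLp.congr' ?_)
    filter_upwards [Ioo_mem_nhdsLT hlt] with x hx using (hF x hx).tsum_eq.symm
  · have hs' : Summable fun k => a k * (-ρ) ^ k :=
      Summable.of_norm_bounded hs fun k => hb k (-ρ) ⟨le_rfl, hlt.le⟩
    rw [hs'.hasSum_iff]
    have h1 : Tendsto (fun x => ∑' k, a k * x ^ k) (nhdsWithin (-ρ) (Ioi (-ρ)))
        (nhds (∑' k, a k * (-ρ) ^ k)) := by
      have := hc (-ρ) ⟨le_rfl, hlt.le⟩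
      rw [← nhdsWithin_Ioo_eq_nhdsGT hlt]
      exact this.mono_left (nhdsWithin_mono _ Ioo_subset_Icc_self)
    refine tendsto_nhds_unique h1 (hLm.congr' ?_)
    filter_upwards [Ioo_mem_nhdsGT hlt] with x hx using (hF x hx).tsum_eq.symm

theorem aux_conv (ρ : ℝ) (F : ℝ → ℝ)
    (h : ∀ (n : ℕ) (A : Matrix (Fin n) (Fin n) ℝ), (∀ i j, A i j ∈ Set.Icc (-ρ) ρ) →
        A.PosSemidef → (A.map F).PosSemidef) (t : ℝ) (ht : t ∈ Ioo 0 ρ) :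
    F t + F (-t) ≤ F ρ + F (-ρ) ∧ F t - F (-t) ≤ F ρ - F (-ρ) := by
  obtain ⟨h0, h1⟩ := ht
  have hP := h 4 !![ρ, -ρ, t, -t; -ρ, ρ, -t, t; t, -t, ρ, -ρ; -t, t, -ρ, ρ] (by
    intro i j
    rw [Set.mem_Icc]
    fin_cases i <;> fin_cases j <;> simp <;> (try constructor) <;> linarith) (by
    refine Matrix.PosSemidef.of_dotProduct_mulVec_nonneg ?_ ?_
    · ext i j
      fin_cases i <;> fin_cases j <;> simp
    · intro x
      simp [dotProduct, Matrix.mulVec, Fin.sum_univ_four]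
      nlinarith [mul_nonneg h0.le (sq_nonneg ((x 0 - x 1) + (x 2 - x 3))),
        mul_nonneg (sub_nonneg.2 h1.le) (sq_nonneg (x 0 - x 1)),
        mul_nonneg (sub_nonneg.2 h1.le) (sq_nonneg (x 2 - x 3))])
  have e1 := hP.dotProduct_mulVec_nonneg ![1, 1, -1, -1]
  have e2 := hP.dotProduct_mulVec_nonneg ![1, -1, -1, 1]
  simp [dotProduct, Matrix.mulVec, Fin.sum_univ_four] at e1 e2
  constructor <;> linarith

/-- Boundary behaviour of entrywise positivity preservers on matrices with entries in
`[-ρ, ρ]`: the jump condition at `±ρ` is sufficient for preservation, and necessary when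
the analytic restriction is odd or even. -/
theorem preserver_closed_symm_boundary (ρ : ℝ) (hρ : 0 < ρ) (F : ℝ → ℝ)
    (hAn : AnalyticOnNhd ℝ F (Set.Ioo (-ρ) ρ))
    (hAbs : ∀ k : ℕ, ∀ x ∈ Set.Ioo (0 : ℝ) ρ,
      0 ≤ iteratedDerivWithin k F (Set.Ioo 0 ρ) x)
    (Lp Lm : ℝ)
    (hLp : Tendsto F (nhdsWithin ρ (Set.Iio ρ)) (nhds Lp))
    (hLm : Tendsto F (nhdsWithin (-ρ) (Set.Ioi (-ρ))) (nhds Lm)) :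
    ((|F (-ρ) - Lm| ≤ F ρ - Lp) →
      ∀ (n : ℕ) (A : Matrix (Fin n) (Fin n) ℝ), (∀ i j, A i j ∈ Set.Icc (-ρ) ρ) →
        A.PosSemidef → (A.map F).PosSemidef) ∧
    (((∀ x ∈ Set.Ioo (-ρ) ρ, F (-x) = -F x) ∨
        (∀ x ∈ Set.Ioo (-ρ) ρ, F (-x) = F x)) →
      (∀ (n : ℕ) (A : Matrix (Fin n) (Fin n) ℝ), (∀ i j, A i j ∈ Set.Icc (-ρ) ρ) →
        A.PosSemidef → (A.map F).PosSemidef) →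
      |F (-ρ) - Lm| ≤ F ρ - Lp) := by
  obtain ⟨a, ha, hs, hF⟩ := aux_series ρ hρ F hAn hAbs Lp hLp
  obtain ⟨hp, hm⟩ := aux_end ρ hρ F a ha hs hF Lp Lm hLp hLm
  refine ⟨?_, ?_⟩
  · intro hj n A hA hPSD
    obtain ⟨hj1, hj2⟩ := abs_le.1 hj
    set c := ((F ρ - Lp) + (F (-ρ) - Lm)) / 2 with hc
    set d := ((F ρ - Lp) - (F (-ρ) - Lm)) / 2 with hd
    have hc0 : 0 ≤ c := by rw [hc]; linarith
    have hd0 : 0 ≤ d := by rw [hd]; linarith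
    refine aux_lim A (fun k x => (∑ i ∈ Finset.range k, a i * x ^ i) +
      (c * ((ρ ^ (2 * k))⁻¹ * x ^ (2 * k)) + d * ((ρ ^ (2 * k + 1))⁻¹ * x ^ (2 * k + 1)))) F ?_ ?_
    · intro k
      convert (aux_psum A hPSD a ha k).add
        (((aux_pow A hPSD (2 * k)).smul (a := c * (ρ ^ (2 * k))⁻¹) (by positivity)).add
        ((aux_pow A hPSD (2 * k + 1)).smul (a := d * (ρ ^ (2 * k + 1))⁻¹) (by positivity))) using 1
      ext i j
      simp [mul_assoc]
    · intro i j
      have hx := hA i j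
      generalize A i j = x at hx
      have hne : ρ ≠ 0 := hρ.ne'
      rcases eq_or_lt_of_le hx.1 with h | h
      · subst h
        have e : F (-ρ) = Lm + (c - d) := by rw [hc, hd]; ring
        rw [e]
        refine hm.tendsto_sum_nat.add (tendsto_const_nhds.congr fun k => ?_)
        rw [pow_succ, pow_succ, Even.neg_pow (even_two_mul k)]
        field_simp
        ring
      rcases eq_or_lt_of_le hx.2 with h' | h'
      · subst h'
        have e : F x = Lp + (c + d) := by rw [hc, hd]; ring
        rw [e]
        refine hp.tendsto_sum_nat.add (tendsto_const_nhds.congr fun k => ?_)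
        field_simp
      · have hlt : |x / ρ| < 1 := by
          rw [abs_div, abs_of_pos hρ, div_lt_one hρ, abs_lt]; exact ⟨h, h'⟩
        have ht := tendsto_pow_atTop_nhds_zero_of_abs_lt_one hlt
        have t1 : Tendsto (fun k : ℕ => 2 * k) atTop atTop :=
          tendsto_atTop_mono (fun k => by simp only [id]; omega) tendsto_id
        have t2 : Tendsto (fun k : ℕ => 2 * k + 1) atTop atTop :=
          tendsto_atTop_mono (fun k => by simp only [id]; omega) tendsto_id
        have hh := (hF x ⟨h, h'⟩).tendsto_sum_nat.add
          (((ht.comp t1).const_mul c).add ((ht.comp t2).const_mul d))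
        simp only [mul_zero, add_zero] at hh
        refine hh.congr fun k => ?_
        simp only [Function.comp, div_pow]
        ring
  · intro _ hpres
    have hneg : Tendsto (fun x : ℝ => F (-x)) (nhdsWithin ρ (Iio ρ)) (nhds Lm) := by
      refine hLm.comp ?_
      refine tendsto_nhdsWithin_iff.2 ⟨?_, ?_⟩
      · exact (continuous_neg.tendsto ρ).mono_left nhdsWithin_le_nhds
      · filter_upwards [self_mem_nhdsWithin] with x hx
        simpa using hx
    have e1 : Lp + Lm ≤ F ρ + F (-ρ) := by
      refine le_of_tendsto (hLp.add hneg) ?_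
      filter_upwards [Ioo_mem_nhdsLT hρ] with x hx using (aux_conv ρ F hpres x hx).1
    have e2 : Lp - Lm ≤ F ρ - F (-ρ) := by
      refine le_of_tendsto (hLp.sub hneg) ?_
      filter_upwards [Ioo_mem_nhdsLT hρ] with x hx using (aux_conv ρ F hpres x hx).2
    rw [abs_le]
    constructor <;> linarith
end
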